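/- The function u defined by u(t, x) = F_p(t, Δ(t, x)) for x > 0 and u(t, x) = −F_p(t, Δ(t, −x)) for x < 0 (extended arbitrarily, e.g. by 0, at x = 0) is a Kruzhkov entropy solution of ∂_t u + ∂_x(u²/2 + g(x)) = 0 with initial datum u₀: that is, u is bounded, and for every nonnegative test function φ ∈ C_c^∞([0, +∞) × ℝ) and every k ∈ ℝ, ∫₀^∞ ∫_ℝ [ |u(t,x) − k| ∂_t φ(t,x) + sgn(u(t,x) − k)((u(t,x)²/2) − (k²/2)) ∂_x φ(t,x) − sgn(u(t,x) − k) g′(x) φ(t,x) ] dx dt + ∫_ℝ |u₀(x) − k| φ(0,x) dx ≥ 0. -/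

import Mathlib

open Real Set Filter MeasureTheory
open scoped Topology

/-- The potential `g` from the Hamiltonian `H(x,p) = p²/2 + g(x)`. -/
noncomputable def g (x : ℝ) : ℝ := if |x| ≤ 1 then 1 - (1 - x ^ 2) ^ 4 else 1

/-- The derivative of `g`. -/
noncomputable def g' (x : ℝ) : ℝ := if |x| ≤ 1 then 8 * x * (1 - x ^ 2) ^ 3 else 0

/-- `(q, p)` is a (global) solution of the Hamiltonian system (HS): `q̇ = p`, `ṗ = -g'(q)`. -/
def IsHSSol (q p : ℝ → ℝ) : Prop :=
  (∀ t : ℝ, HasDerivAt q (p t) t) ∧ (∀ t : ℝ, HasDerivAt p (-(g' (q t))) t)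

/-- `F` is the flow of (HS): `F t q₀ p₀ = (q t, p t)` for the solution with data `(q₀, p₀)`. -/
def IsHSFlow (F : ℝ → ℝ → ℝ → ℝ × ℝ) : Prop :=
  ∀ q₀ p₀ : ℝ,
    IsHSSol (fun t => (F t q₀ p₀).1) (fun t => (F t q₀ p₀).2) ∧ F 0 q₀ p₀ = (q₀, p₀)

/-- The set `([0,∞) × {2}) ∪ ({0} × (0,2])`, codomain of the map `Δ`. -/
def Dset : Set (ℝ × ℝ) := (Ici (0:ℝ) ×ˢ ({2} : Set ℝ)) ∪ ({(0:ℝ)} ×ˢ Ioc (0:ℝ) 2)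

/-- `T` is the smallest positive period of `q`. -/
def IsSmallestPeriod (q : ℝ → ℝ) (T : ℝ) : Prop :=
  0 < T ∧ Function.Periodic q T ∧ ∀ T' : ℝ, 0 < T' → Function.Periodic q T' → T ≤ T'

/-- `T` is the period map `𝒯`, assigning to `p₀ ∈ (0, √2)` the smallest positive period of
the `q`-component of the solution of (HS) with initial datum `(0, p₀)`. -/
def IsPeriodMap (F : ℝ → ℝ → ℝ → ℝ × ℝ) (T : ℝ → ℝ) : Prop :=
  ∀ p₀ ∈ Ioo (0:ℝ) (Real.sqrt 2), IsSmallestPeriod (fun t => (F t 0 p₀).1) (T p₀)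

/-- `Δ` associates to `(t,x)` the datum in `Dset` whose orbit stays positive on `(0,t)`
and reaches `x` at time `t`. -/
def IsDeltaMap (F : ℝ → ℝ → ℝ → ℝ × ℝ) (Δ : ℝ → ℝ → ℝ × ℝ) : Prop :=
  ∀ t x : ℝ, 0 < t → 0 < x →
    Δ t x ∈ Dset ∧ (F t (Δ t x).1 (Δ t x).2).1 = x ∧
      ∀ s ∈ Ioo (0:ℝ) t, 0 < (F s (Δ t x).1 (Δ t x).2).1

/-- The solution `u` of the conservation law built from the flow `F` and the map `Δ`
(extended by `0` at `x = 0`). -/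
noncomputable def usol (F : ℝ → ℝ → ℝ → ℝ × ℝ) (Δ : ℝ → ℝ → ℝ × ℝ) (t x : ℝ) : ℝ :=
  if 0 < x then (F t (Δ t x).1 (Δ t x).2).2
  else if x < 0 then -(F t (Δ t (-x)).1 (Δ t (-x)).2).2
  else 0

/-- The initial datum `u₀`: `-2` for `x < 0` and `2` for `x > 0`. -/
noncomputable def u₀ (x : ℝ) : ℝ := if x < 0 then -2 else 2



lemma maxpow_deriv (n : ℕ) (y : ℝ) :
    HasDerivAt (fun y : ℝ => (max 0 y) ^ (n + 2)) ((n + 2 : ℝ) * (max 0 y) ^ (n + 1)) y := by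
  have key : ∀ y : ℝ, y ≠ 0 → HasDerivAt (fun y : ℝ => (max 0 y) ^ (n + 2))
      ((n + 2 : ℝ) * (max 0 y) ^ (n + 1)) y := by
    intro y hy
    rcases lt_or_gt_of_ne hy with h | h
    · have : (fun y : ℝ => (max 0 y) ^ (n + 2)) =ᶠ[𝓝 y] fun _ => 0 := by
        filter_upwards [Iio_mem_nhds h] with z hz
        simp [max_eq_left (le_of_lt (show z < 0 from hz))]
      rw [max_eq_left h.le]
      simpa using (hasDerivAt_const y (0:ℝ)).congr_of_eventuallyEq this
    · have : (fun y : ℝ => (max 0 y) ^ (n + 2)) =ᶠ[𝓝 y] fun y => y ^ (n + 2) := by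
        filter_upwards [Ioi_mem_nhds h] with z hz
        simp [max_eq_right (le_of_lt (show 0 < z from hz))]
      rw [max_eq_right h.le]
      have h2 := (hasDerivAt_pow (n + 2) y).congr_of_eventuallyEq this
      refine h2.congr_deriv ?_
      push_cast; rfl
  by_cases hy : y = 0
  · subst hy
    exact hasDerivAt_of_hasDerivAt_of_ne (fun z hz => key z hz)
      (by fun_prop) (by fun_prop)
  · exact key y hy

lemma g_eq (x : ℝ) : g x = 1 - (max 0 (1 - x ^ 2)) ^ 4 := by
  unfold g
  split_ifs with h
  · rw [max_eq_right]; nlinarith [abs_nonneg x, sq_abs x]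
  · rw [max_eq_left]
    · simp
    · push Not at h; nlinarith [abs_nonneg x, sq_abs x]

lemma g'_eq (x : ℝ) : g' x = 8 * x * (max 0 (1 - x ^ 2)) ^ 3 := by
  unfold g'
  split_ifs with h
  · rw [max_eq_right]; nlinarith [abs_nonneg x, sq_abs x]
  · rw [max_eq_left]
    · simp
    · push Not at h; nlinarith [abs_nonneg x, sq_abs x]

lemma one_sub_sq_deriv (x : ℝ) : HasDerivAt (fun x : ℝ => 1 - x ^ 2) (-(2 * x)) x := by
  have := (hasDerivAt_pow 2 x).const_sub 1
  simpa using this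

lemma g_deriv (x : ℝ) : HasDerivAt g (g' x) x := by
  have h := ((maxpow_deriv 2 (1 - x ^ 2)).comp x (one_sub_sq_deriv x)).const_sub 1
  have e : g = fun x => 1 - ((fun y : ℝ => (max 0 y) ^ (2 + 2)) ∘ fun x : ℝ => 1 - x ^ 2) x := by
    funext x; simp [g_eq]
  rw [e]
  refine h.congr_deriv ?_
  rw [g'_eq]; push_cast; ring

lemma g'_deriv (x : ℝ) : HasDerivAt g'
    (8 * (max 0 (1 - x ^ 2)) ^ 3 - 48 * x ^ 2 * (max 0 (1 - x ^ 2)) ^ 2) x := by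
  have h := ((hasDerivAt_id x).const_mul 8).mul
    ((maxpow_deriv 1 (1 - x ^ 2)).comp x (one_sub_sq_deriv x))
  have e : g' = (fun y => 8 * id y) *
     ((fun y : ℝ => (max 0 y) ^ (1 + 2)) ∘ fun x : ℝ => 1 - x ^ 2) := by
    funext x; simp [g'_eq]
  rw [e]
  refine h.congr_deriv ?_
  simp; push_cast; ring

lemma m_bd (x : ℝ) : 0 ≤ max 0 (1 - x ^ 2) ∧ max 0 (1 - x ^ 2) ≤ 1 :=
  ⟨le_max_left _ _, max_le zero_le_one (by nlinarith [sq_nonneg x])⟩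

lemma g_nonneg (x : ℝ) : 0 ≤ g x := by
  rw [g_eq]; have := pow_le_one₀ (n := 4) (m_bd x).1 (m_bd x).2; linarith

lemma g_le (x : ℝ) : g x ≤ 1 := by
  rw [g_eq]; have := pow_nonneg (m_bd x).1 4; linarith

lemma g_zero : g 0 = 0 := by rw [g_eq]; norm_num

lemma g'_nonneg {x : ℝ} (hx : 0 ≤ x) : 0 ≤ g' x := by
  rw [g'_eq]; have := pow_nonneg (m_bd x).1 3; positivity

lemma g'_odd (x : ℝ) : g' (-x) = - g' x := by
  rw [g'_eq, g'_eq]; simp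

lemma g'_abs (x : ℝ) : |g' x| ≤ 8 := by
  unfold g'
  split_ifs with h
  · have h1 : (1 - x ^ 2) ≤ 1 := by nlinarith [sq_nonneg x]
    have h0 : 0 ≤ (1 - x ^ 2) := by nlinarith [abs_nonneg x, sq_abs x]
    have := pow_le_one₀ (n := 3) h0 h1
    have h3 := pow_nonneg h0 3
    rw [abs_mul, abs_mul, abs_of_nonneg h3]
    norm_num
    nlinarith [abs_nonneg x]
  · simp

lemma g'_cont : Continuous g' := continuous_iff_continuousAt.2 fun x => (g'_deriv x).continuousAt

lemma g_mono {x y : ℝ} (hx : 0 ≤ x) (hxy : x ≤ y) : g x ≤ g y := by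
  have : MonotoneOn g (Ici 0) := by
    apply monotoneOn_of_hasDerivWithinAt_nonneg (convex_Ici 0) (f' := g')
    · exact fun x _ => (g_deriv x).continuousAt.continuousWithinAt
    · exact fun x _ => (g_deriv x).hasDerivWithinAt
    · intro x hx; rw [interior_Ici] at hx; exact g'_nonneg (le_of_lt hx)
  exact this hx (hx.trans hxy) hxy

lemma g_lip {x y : ℝ} (hxy : x ≤ y) : g y - g x ≤ 8 * (y - x) := by
  have : Monotone fun x => 8 * x - g x := by
    apply monotone_of_deriv_nonneg
    · exact fun x => (((hasDerivAt_id x).const_mul 8).sub (g_deriv x)).differentiableAt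
    · intro x
      have h : HasDerivAt (fun x => 8 * x - g x) (8 * 1 - g' x) x :=
        ((hasDerivAt_id x).const_mul 8).sub (g_deriv x)
      rw [h.deriv]; have := (abs_le.1 (g'_abs x)).2; linarith
  have := this hxy; simp only at this; linarith

lemma g'_lip {x y : ℝ} (hxy : x ≤ y) : -(g' y - g' x) ≤ 16 * (y - x) := by
  have : Monotone fun x => 16 * x + g' x := by
    apply monotone_of_deriv_nonneg
    · exact fun x => (((hasDerivAt_id x).const_mul 16).add (g'_deriv x)).differentiableAt
    · intro x
      have h : HasDerivAt (fun x => 16 * x + g' x) (16 * 1 +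
        (8 * (max 0 (1 - x ^ 2)) ^ 3 - 48 * x ^ 2 * (max 0 (1 - x ^ 2)) ^ 2)) x :=
        ((hasDerivAt_id x).const_mul 16).add (g'_deriv x)
      rw [h.deriv]
      rcases le_total (1 - x ^ 2) 0 with h | h
      · rw [max_eq_left h]; norm_num
      · rw [max_eq_right h]
        set m := 1 - x ^ 2 with hm
        have hx : x ^ 2 = 1 - m := by linarith
        have hm1 : m ≤ 1 := by nlinarith [sq_nonneg x]
        rw [hx]
        nlinarith [mul_nonneg h (sq_nonneg (7 * m - 4)), sq_nonneg (7 * m - 4), mul_nonneg h (sub_nonneg.2 hm1)]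
  have := this hxy; simp only at this; linarith

lemma g'_sub {x y : ℝ} (hx : 0 ≤ x) (hxy : x ≤ y) : g' y * x ≤ g' x * y := by
  rw [g'_eq, g'_eq]
  have h1 : max 0 (1 - y ^ 2) ≤ max 0 (1 - x ^ 2) := max_le_max le_rfl (by nlinarith)
  have h2 := pow_le_pow_left₀ (m_bd y).1 h1 3
  have h3 : 0 ≤ x * y := mul_nonneg hx (hx.trans hxy)
  nlinarith [mul_le_mul_of_nonneg_left h2 h3]


/-- admissible orbit up to time `t` -/
def Adm (q p : ℝ → ℝ) (t : ℝ) : Prop :=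
  IsHSSol q p ∧ (q 0, p 0) ∈ Dset ∧ ∀ s ∈ Ioc (0:ℝ) t, 0 < q s

lemma dset_cases {a b : ℝ} (h : (a, b) ∈ Dset) : (0 ≤ a ∧ b = 2) ∨ (a = 0 ∧ 0 < b ∧ b ≤ 2) := by
  simpa [Dset] using h

lemma energy {q p : ℝ → ℝ} (h : IsHSSol q p) (s : ℝ) :
    p s ^ 2 / 2 + g (q s) = p 0 ^ 2 / 2 + g (q 0) := by
  have hd : ∀ s, HasDerivAt (fun s => p s ^ 2 / 2 + g (q s)) 0 s := by
    intro s
    have := (((h.2 s).pow 2).div_const 2).add ((g_deriv (q s)).comp s (h.1 s))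
    refine this.congr_deriv ?_
    simp; ring
  exact is_const_of_deriv_eq_zero (fun s => (hd s).differentiableAt) (fun s => (hd s).deriv) s 0

lemma p_bound {q p : ℝ → ℝ} (h : IsHSSol q p) (hD : (q 0, p 0) ∈ Dset) (s : ℝ) : |p s| ≤ 3 := by
  have e := energy h s
  have h1 := g_nonneg (q s)
  have h2 := g_le (q 0)
  have : p 0 ^ 2 ≤ 4 := by
    rcases dset_cases hD with ⟨_, h⟩ | ⟨_, h, h'⟩
    · rw [h]; norm_num
    · nlinarith
  apply abs_le_of_sq_le_sq _ (by norm_num)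
  linarith

lemma p_ge_one {q p : ℝ → ℝ} (h : IsHSSol q p) (h2 : p 0 = 2) (s : ℝ) : 1 ≤ p s := by
  have hc : Continuous p := continuous_iff_continuousAt.2 fun s => (h.2 s).continuousAt
  have hsq : ∀ s, 2 ≤ p s ^ 2 := by
    intro s
    have e := energy h s
    have h1 := g_nonneg (q 0)
    have h3 := g_le (q s)
    rw [h2] at e
    linarith
  by_contra hlt
  push Not at hlt
  have hm : (1:ℝ) ∈ uIcc (p s) (p 0) := by
    rw [h2, uIcc_of_le (by linarith)]; constructor <;> linarith
  obtain ⟨r, -, hr⟩ := intermediate_value_uIcc (hc.continuousOn (s := uIcc s 0)) hm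
  have := hsq r
  rw [hr] at this; norm_num at this

lemma cont_ind {d : ℝ → ℝ} (hd : Continuous d) {t : ℝ}
    (h0 : ∀ᶠ s in 𝓝[>] (0:ℝ), 0 < d s)
    (hs : ∀ s ∈ Ioc (0:ℝ) t, (∀ r ∈ Ioo (0:ℝ) s, 0 < d r) → d s ≠ 0) :
    ∀ s ∈ Ioc (0:ℝ) t, 0 < d s := by
  by_contra hcon
  push Not at hcon
  obtain ⟨s, hsI, hds⟩ := hcon
  obtain ⟨η, hη, hη'⟩ := mem_nhdsGT_iff_exists_Ioo_subset.1 h0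
  have hη : 0 < η := hη
  set S := Ici (η / 2) ∩ Iic s ∩ {r | d r ≤ 0} with hS
  have hηs : η ≤ s := by
    by_contra hlt
    have : 0 < d s := hη' ⟨hsI.1, not_le.1 hlt⟩
    linarith
  have hne : S.Nonempty := ⟨s, ⟨by simp; linarith, le_refl s⟩, hds⟩
  have hcl : IsClosed S := (isClosed_Ici.inter isClosed_Iic).inter (isClosed_le hd continuous_const)
  have hbdd : BddBelow S := ⟨η / 2, fun r hr => hr.1.1⟩
  have hmem := hcl.csInf_mem hne hbdd
  set r := sInf S with hr
  have hr0 : 0 < r := lt_of_lt_of_le (by linarith) hmem.1.1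
  have hbefore : ∀ r' ∈ Ioo (0:ℝ) r, 0 < d r' := by
    intro r' hr'
    by_contra hneg
    push Not at hneg
    by_cases hc : η / 2 ≤ r'
    · have : r ≤ r' := csInf_le hbdd ⟨⟨hc, hr'.2.le.trans hmem.1.2⟩, hneg⟩
      linarith [hr'.2]
    · have : 0 < d r' := hη' ⟨hr'.1, by push Not at hc; linarith⟩
      linarith
  have hle : d r ≤ 0 := hmem.2
  have hge : 0 ≤ d r := by
    have ht : Tendsto d (𝓝[<] r) (𝓝 (d r)) := hd.continuousAt.tendsto.mono_left nhdsWithin_le_nhds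
    refine ge_of_tendsto ht ?_
    filter_upwards [Ioo_mem_nhdsLT hr0] with x hx using (hbefore x hx).le
  exact hs r ⟨hr0, hmem.1.2.trans hsI.2⟩ hbefore (le_antisymm hle hge)

lemma deriv_nonpos_of_left {d : ℝ → ℝ} {s d' : ℝ} (hd : HasDerivAt d d' s) (hs : 0 < s)
    (h : ∀ r ∈ Ioo (0:ℝ) s, 0 < d r) (h0 : d s = 0) : d' ≤ 0 := by
  have h1 := hasDerivAt_iff_tendsto_slope.1 hd
  have h2 : Tendsto (slope d s) (𝓝[<] s) (𝓝 d') := h1.mono_left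
    (nhdsWithin_mono _ fun x hx => ne_of_lt hx)
  refine le_of_tendsto h2 ?_
  filter_upwards [Ioo_mem_nhdsLT hs] with x hx
  rw [slope_def_field, h0]
  apply div_nonpos_of_nonneg_of_nonpos <;> linarith [h x hx, hx.2]

lemma mono_of {f f' : ℝ → ℝ} {a b : ℝ} (hf : ∀ x, HasDerivAt f (f' x) x)
    (h : ∀ x ∈ Ioo a b, 0 ≤ f' x) : MonotoneOn f (Icc a b) := by
  apply monotoneOn_of_hasDerivWithinAt_nonneg (convex_Icc a b) (f' := f')
  · exact fun x _ => (hf x).continuousAt.continuousWithinAt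
  · exact fun x _ => (hf x).hasDerivWithinAt
  · intro x hx; rw [interior_Icc] at hx; exact h x hx

lemma sol_cont {q p : ℝ → ℝ} (h : IsHSSol q p) : Continuous q ∧ Continuous p :=
  ⟨continuous_iff_continuousAt.2 fun s => (h.1 s).continuousAt,
   continuous_iff_continuousAt.2 fun s => (h.2 s).continuousAt⟩

lemma wronsk {q₁ p₁ q₂ p₂ : ℝ → ℝ} {t : ℝ} (ht : 0 ≤ t) (h1 : IsHSSol q₁ p₁) (h2 : IsHSSol q₂ p₂)
    (z1 : q₁ 0 = 0) (z2 : q₂ 0 = 0) (hp : ∀ s ∈ Ioo 0 t, 0 < q₁ s)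
    (hle : ∀ s ∈ Ioo 0 t, q₁ s ≤ q₂ s) : 0 ≤ p₂ t * q₁ t - p₁ t * q₂ t := by
  have hd : ∀ s, HasDerivAt (fun s => p₂ s * q₁ s - p₁ s * q₂ s)
      (g' (q₁ s) * q₂ s - g' (q₂ s) * q₁ s) s := by
    intro s
    refine (((h2.2 s).mul (h1.1 s)).sub ((h1.2 s).mul (h2.1 s))).congr_deriv ?_
    ring
  have := mono_of hd (a := 0) (b := t) (fun s hs => by
    have := g'_sub (hp s hs).le (hle s hs); linarith) (left_mem_Icc.2 ht) (right_mem_Icc.2 ht) ht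
  simpa [z1, z2] using this

lemma upper {q₁ p₁ q₂ p₂ : ℝ → ℝ} {t : ℝ} (ht : 0 < t) (h1 : IsHSSol q₁ p₁) (h2 : IsHSSol q₂ p₂)
    (hle : ∀ s ∈ Icc 0 t, q₁ s ≤ q₂ s) : p₂ t - p₁ t ≤ (1 / t + 4) * (q₂ t - q₁ t) := by
  have hy : ∀ s, HasDerivAt (fun s => s * exp (4 * s)) ((1 + 4 * s) * exp (4 * s)) s := by
    intro s
    have h4 : HasDerivAt (fun s : ℝ => 4 * s) (4 * 1) s := (hasDerivAt_id s).const_mul 4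
    refine ((hasDerivAt_id s).mul h4.exp).congr_deriv ?_
    simp; ring
  have hy' : ∀ s, HasDerivAt (fun s => (1 + 4 * s) * exp (4 * s)) ((8 + 16 * s) * exp (4 * s)) s := by
    intro s
    have h4 : HasDerivAt (fun s : ℝ => 4 * s) (4 * 1) s := (hasDerivAt_id s).const_mul 4
    refine ((h4.const_add 1).mul h4.exp).congr_deriv ?_
    ring
  have hd : ∀ s, HasDerivAt (fun s => (q₂ s - q₁ s) * ((1 + 4 * s) * exp (4 * s))
      - (p₂ s - p₁ s) * (s * exp (4 * s)))
      ((q₂ s - q₁ s) * ((8 + 16 * s) * exp (4 * s)) + (g' (q₂ s) - g' (q₁ s)) * (s * exp (4 * s))) s := by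
    intro s
    refine ((((h2.1 s).sub (h1.1 s)).mul (hy' s)).sub
      (((h2.2 s).sub (h1.2 s)).mul (hy s))).congr_deriv ?_
    simp only [Pi.sub_apply]
    ring
  have := mono_of hd (a := 0) (b := t) (fun s hs => by
    have h3 := hle s ⟨hs.1.le, hs.2.le⟩
    have h4 := g'_lip h3
    have h5 := (exp_pos (4 * s))
    have h6 : 0 ≤ (q₂ s - q₁ s) * (8 + 16 * s) + (g' (q₂ s) - g' (q₁ s)) * s := by
      nlinarith [mul_nonneg hs.1.le (sub_nonneg.2 h3), hs.1]
    have := mul_nonneg h6 h5.le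
    linarith) (left_mem_Icc.2 ht.le) (right_mem_Icc.2 ht.le) ht.le
  simp only [mul_zero, add_zero, exp_zero, zero_mul, sub_zero, mul_one] at this
  have h0 := hle 0 (left_mem_Icc.2 ht.le)
  have h5 := exp_pos (4 * t)
  have h7 : 0 ≤ ((q₂ t - q₁ t) * (1 + 4 * t) - (p₂ t - p₁ t) * t) * exp (4 * t) := by linarith
  have h8 : 0 ≤ (q₂ t - q₁ t) * (1 + 4 * t) - (p₂ t - p₁ t) * t := nonneg_of_mul_nonneg_left h7 h5
  have e : (1 / t + 4) * (q₂ t - q₁ t) = ((q₂ t - q₁ t) * (1 + 4 * t)) / t := by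
    field_simp
  rw [e, le_div_iff₀ ht]
  linarith

/-- momentum comparison when the right orbit is fast -/
lemma fast {q₁ p₁ q₂ p₂ : ℝ → ℝ} (h1 : IsHSSol q₁ p₁) (h2 : IsHSSol q₂ p₂)
    (hE : p₁ 0 ^ 2 / 2 + g (q₁ 0) ≤ p₂ 0 ^ 2 / 2 + g (q₂ 0)) (hp : p₂ 0 = 2) (s : ℝ)
    (hd : q₁ s ≤ q₂ s) : - (8 * (q₂ s - q₁ s)) ≤ p₂ s - p₁ s := by
  have e1 := energy h1 s
  have e2 := energy h2 s
  have h3 := p_ge_one h2 hp s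
  have h4 := g_lip hd
  by_contra hcon
  push Not at hcon
  have h5 : p₂ s < p₁ s := by linarith
  nlinarith

lemma order {q₁ p₁ q₂ p₂ : ℝ → ℝ} {t : ℝ} (ht : 0 < t) (h1 : Adm q₁ p₁ t) (h2 : Adm q₂ p₂ t)
    (hk : q₁ 0 + p₁ 0 < q₂ 0 + p₂ 0) :
    (∀ s ∈ Icc 0 t, q₁ s ≤ q₂ s) ∧ - ((8 + 3 / q₁ t) * (q₂ t - q₁ t)) ≤ p₂ t - p₁ t := by
  have hc1 := sol_cont h1.1
  have hc2 := sol_cont h2.1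
  have hdd : ∀ s, HasDerivAt (fun s => q₂ s - q₁ s) (p₂ s - p₁ s) s :=
    fun s => (h2.1.1 s).sub (h1.1.1 s)
  have hdc : Continuous fun s => q₂ s - q₁ s := hc2.1.sub hc1.1
  have hq1 : 0 < q₁ t := h1.2.2 t ⟨ht, le_rfl⟩
  by_cases hz : q₂ 0 = 0
  · -- both start from zero
    have hz1 : q₁ 0 = 0 := by
      rcases dset_cases h1.2.1 with ⟨a, b⟩ | ⟨a, b⟩
      · rcases dset_cases h2.2.1 with ⟨a', b'⟩ | ⟨a', b', c'⟩ <;> linarith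
      · exact a
    have hp1 : 0 < p₁ 0 := by
      rcases dset_cases h1.2.1 with ⟨a, b⟩ | ⟨a, b, c⟩ <;> linarith
    have hpp : p₁ 0 < p₂ 0 := by linarith
    have hpos : ∀ s ∈ Ioc (0:ℝ) t, 0 < q₂ s - q₁ s := by
      apply cont_ind hdc
      · have hs := (hasDerivAt_iff_tendsto_slope.1 (hdd 0)).mono_left
          (nhdsWithin_mono (0:ℝ) (fun x (hx : x ∈ Ioi (0:ℝ)) => ne_of_gt hx))
        have := hs.eventually (lt_mem_nhds (sub_pos.2 hpp))
        filter_upwards [this, self_mem_nhdsWithin] with s hs1 hs2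
        rw [slope_def_field, hz, hz1] at hs1
        simp only [sub_zero] at hs1
        have hs2 : 0 < s := hs2
        have := mul_pos hs1 hs2
        rwa [div_mul_cancel₀ _ hs2.ne'] at this
      · intro s hs hb h0
        have hw := wronsk hs.1.le h1.1 h2.1 hz1 hz
          (fun r hr => h1.2.2 r ⟨hr.1, hr.2.le.trans hs.2⟩) (fun r hr => by linarith [hb r hr])
        have hle := deriv_nonpos_of_left (hdd s) hs.1 hb h0
        have hqe : q₂ s = q₁ s := by linarith
        have hqp := h1.2.2 s hs
        rw [hqe] at hw
        have : p₁ s ≤ p₂ s := by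
          by_contra hlt
          push Not at hlt
          nlinarith
        have hpe : p₁ s = p₂ s := by linarith
        have e1 := energy h1.1 s
        have e2 := energy h2.1 s
        rw [hqe, hz, ← hpe] at e2
        rw [hz1] at e1
        nlinarith
    have hall : ∀ s ∈ Icc 0 t, q₁ s ≤ q₂ s := by
      intro s hs
      rcases eq_or_lt_of_le hs.1 with h | h
      · rw [← h, hz, hz1]
      · linarith [hpos s ⟨h, hs.2⟩]
    refine ⟨hall, ?_⟩
    have hw := wronsk ht.le h1.1 h2.1 hz1 hz
          (fun r hr => h1.2.2 r ⟨hr.1, hr.2.le⟩) (fun r hr => hall r ⟨hr.1.le, hr.2.le⟩)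
    have hd := hall t ⟨ht.le, le_rfl⟩
    have hb := (abs_le.1 (p_bound h1.1 h1.2.1 t)).1
    have h3 : -(3 * (q₂ t - q₁ t)) ≤ (p₂ t - p₁ t) * q₁ t := by nlinarith
    have h4 : -(3 * (q₂ t - q₁ t)) / q₁ t ≤ p₂ t - p₁ t := by rwa [div_le_iff₀ hq1]
    have e : -(3 * (q₂ t - q₁ t)) / q₁ t = - (3 / q₁ t * (q₂ t - q₁ t)) := by ring
    rw [e] at h4
    nlinarith
  · obtain ⟨hq20, hp2⟩ : 0 < q₂ 0 ∧ p₂ 0 = 2 := by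
      rcases dset_cases h2.2.1 with ⟨a, b⟩ | ⟨a, b⟩
      · exact ⟨lt_of_le_of_ne a (Ne.symm hz), b⟩
      · exact absurd a hz
    have hq0 : q₁ 0 < q₂ 0 := by
      rcases dset_cases h1.2.1 with ⟨a, b⟩ | ⟨a, b, c⟩ <;> linarith
    have hE : p₁ 0 ^ 2 / 2 + g (q₁ 0) ≤ p₂ 0 ^ 2 / 2 + g (q₂ 0) := by
      rcases dset_cases h1.2.1 with ⟨a, b⟩ | ⟨a, b, c⟩
      · have := g_mono a hq0.le
        rw [b, hp2]; linarith
      · have := g_mono le_rfl hq20.le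
        rw [a, hp2]; nlinarith
    have hpos : ∀ s ∈ Ioc (0:ℝ) t, 0 < q₂ s - q₁ s := by
      apply cont_ind hdc
      · have : ∀ᶠ s in 𝓝 (0:ℝ), 0 < q₂ s - q₁ s :=
          hdc.continuousAt.eventually (lt_mem_nhds (sub_pos.2 hq0))
        exact this.filter_mono nhdsWithin_le_nhds
      · intro s hs hb h0
        have hd : ∀ s, HasDerivAt (fun s => (q₂ s - q₁ s) * exp (8 * s))
            (((p₂ s - p₁ s) + 8 * (q₂ s - q₁ s)) * exp (8 * s)) s := by
          intro s
          have h4 : HasDerivAt (fun s : ℝ => 8 * s) (8 * 1) s := (hasDerivAt_id s).const_mul 8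
          refine ((hdd s).mul h4.exp).congr_deriv ?_
          ring
        have := mono_of hd (a := 0) (b := s) (fun r hr => by
          have := fast h1.1 h2.1 hE hp2 r (by linarith [hb r hr])
          exact mul_nonneg (by linarith) (exp_pos _).le)
          (left_mem_Icc.2 hs.1.le) (right_mem_Icc.2 hs.1.le) hs.1.le
        simp only [mul_zero, exp_zero, mul_one] at this
        rw [h0, zero_mul] at this
        linarith
    have hall : ∀ s ∈ Icc 0 t, q₁ s ≤ q₂ s := by
      intro s hs
      rcases eq_or_lt_of_le hs.1 with h | h
      · rw [← h]; exact hq0.le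
      · linarith [hpos s ⟨h, hs.2⟩]
    refine ⟨hall, ?_⟩
    have hd := hall t ⟨ht.le, le_rfl⟩
    have := fast h1.1 h2.1 hE hp2 t hd
    have h3 : 0 ≤ 3 / q₁ t * (q₂ t - q₁ t) := mul_nonneg (by positivity) (by linarith)
    linarith


/-- the orbit properties of `u` on the quadrant -/
structure Good (u : ℝ → ℝ → ℝ) : Prop where
  bd : ∀ t x, 0 < t → 0 < x → |u t x| ≤ 3
  lipx : ∀ ε t x y, 0 < ε → ε ≤ t → ε ≤ x → ε ≤ y → |u t x - u t y| ≤ (12 + 4 / ε) * |x - y|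
  char : ∀ t x, 0 < t → 0 < x → ∃ q p : ℝ → ℝ, q t = x ∧ p t = u t x ∧
    (∀ s, HasDerivAt q (p s) s) ∧ (∀ s, HasDerivAt p (-(g' (q s))) s) ∧ (∀ s, |p s| ≤ 3) ∧
    ∀ s ∈ Ioc (0:ℝ) t, 0 < q s ∧ u s (q s) = p s
  upper : ∀ t x, 0 < t → 0 < x → u t x ≤ x / t
  init : ∀ t x, 0 < t → 3 * t < x → |u t x - 2| ≤ 8 * t

lemma pair_aux {q₁ p₁ q₂ p₂ : ℝ → ℝ} {t ε : ℝ} (hε : 0 < ε) (ht : ε ≤ t) (h1 : Adm q₁ p₁ t)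
    (h2 : Adm q₂ p₂ t) (he : ε ≤ q₁ t)
    (hk : q₁ 0 + p₁ 0 < q₂ 0 + p₂ 0) : |p₁ t - p₂ t| ≤ (12 + 4 / ε) * |q₁ t - q₂ t| := by
  have ht0 := hε.trans_le ht
  obtain ⟨ha, hb⟩ := order ht0 h1 h2 hk
  have hc := upper ht0 h1.1 h2.1 ha
  have hd := ha t ⟨ht0.le, le_rfl⟩
  rw [abs_sub_comm, abs_sub_comm (q₁ t), abs_of_nonneg (sub_nonneg.2 hd)]
  have i1 : 1 / t ≤ 1 / ε := one_div_le_one_div_of_le hε ht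
  have i2 : 3 / q₁ t ≤ 3 / ε := div_le_div_of_nonneg_left (by norm_num) hε he
  have i3 : 0 < 1 / ε := by positivity
  have e4 : 4 / ε = 4 * (1 / ε) := by ring
  have e3 : 3 / ε = 3 * (1 / ε) := by ring
  have hd' := sub_nonneg.2 hd
  rw [abs_le]
  constructor
  · have : (8 + 3 / q₁ t) * (q₂ t - q₁ t) ≤ (12 + 4 / ε) * (q₂ t - q₁ t) :=
      mul_le_mul_of_nonneg_right (by linarith) hd'
    linarith
  · have : (1 / t + 4) * (q₂ t - q₁ t) ≤ (12 + 4 / ε) * (q₂ t - q₁ t) :=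
      mul_le_mul_of_nonneg_right (by linarith) hd'
    linarith

lemma dset_key {a b : ℝ × ℝ} (ha : a ∈ Dset) (hb : b ∈ Dset) (h : a.1 + a.2 = b.1 + b.2) :
    a = b := by
  obtain ⟨a1, a2⟩ := a
  obtain ⟨b1, b2⟩ := b
  simp only at h
  rcases dset_cases ha with ⟨h1, h2⟩ | ⟨h1, h2, h3⟩ <;>
  rcases dset_cases hb with ⟨h4, h5⟩ | ⟨h4, h5, h6⟩ <;>
  (ext <;> simp <;> linarith)

lemma pairF {F : ℝ → ℝ → ℝ → ℝ × ℝ} (hF : IsHSFlow F) {a b : ℝ × ℝ} {t ε : ℝ}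
    (hε : 0 < ε) (ht : ε ≤ t)
    (h1 : Adm (fun s => (F s a.1 a.2).1) (fun s => (F s a.1 a.2).2) t)
    (h2 : Adm (fun s => (F s b.1 b.2).1) (fun s => (F s b.1 b.2).2) t)
    (e1 : ε ≤ (F t a.1 a.2).1) (e2 : ε ≤ (F t b.1 b.2).1) :
    |(F t a.1 a.2).2 - (F t b.1 b.2).2| ≤ (12 + 4 / ε) * |(F t a.1 a.2).1 - (F t b.1 b.2).1| := by
  have ha := (hF a.1 a.2).2
  have hb := (hF b.1 b.2).2
  have hka : (F 0 a.1 a.2).1 + (F 0 a.1 a.2).2 = a.1 + a.2 := by rw [ha]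
  have hkb : (F 0 b.1 b.2).1 + (F 0 b.1 b.2).2 = b.1 + b.2 := by rw [hb]
  rcases lt_trichotomy (a.1 + a.2) (b.1 + b.2) with h | h | h
  · exact pair_aux hε ht h1 h2 e1 (by simpa only [hka, hkb] using h)
  · have hd1 := h1.2.1
    have hd2 := h2.2.1
    simp only [ha] at hd1
    simp only [hb] at hd2
    have : a = b := dset_key hd1 hd2 h
    rw [this]; simp
  · rw [abs_sub_comm, abs_sub_comm (F t a.1 a.2).1]
    exact pair_aux hε ht h2 h1 e2 (by simpa only [hka, hkb] using h)

lemma lip_of_deriv {q p : ℝ → ℝ} {C : ℝ} (h : ∀ s, HasDerivAt q (p s) s) (hb : ∀ s, |p s| ≤ C)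
    (s t : ℝ) : |q s - q t| ≤ C * |s - t| := by
  have := Convex.norm_image_sub_le_of_norm_hasDerivWithin_le (s := univ) (f := q) (f' := p)
    (fun x _ => (h x).hasDerivWithinAt) (fun x _ => hb x) convex_univ (mem_univ t) (mem_univ s)
  simpa using this

lemma good_usol {F : ℝ → ℝ → ℝ → ℝ × ℝ} (hF : IsHSFlow F)
    {Δ : ℝ → ℝ → ℝ × ℝ} (hΔ : IsDeltaMap F Δ) : Good (usol F Δ) := by
  have hu : ∀ t x, 0 < x → usol F Δ t x = (F t (Δ t x).1 (Δ t x).2).2 := by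
    intro t x hx; simp [usol, hx]
  have hadm : ∀ a ∈ Dset, ∀ t, (∀ s ∈ Ioc (0:ℝ) t, 0 < (F s a.1 a.2).1) →
      Adm (fun s => (F s a.1 a.2).1) (fun s => (F s a.1 a.2).2) t := by
    intro a ha t h
    refine ⟨(hF a.1 a.2).1, ?_, h⟩
    simp only [(hF a.1 a.2).2]; exact ha
  have hA : ∀ t x, 0 < t → 0 < x → Adm (fun s => (F s (Δ t x).1 (Δ t x).2).1)
      (fun s => (F s (Δ t x).1 (Δ t x).2).2) t := by
    intro t x ht hx
    obtain ⟨h1, h2, h3⟩ := hΔ t x ht hx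
    refine hadm _ h1 t ?_
    intro s hs
    rcases eq_or_lt_of_le hs.2 with h | h
    · rw [h, h2]; exact hx
    · exact h3 s ⟨hs.1, h⟩
  have hx' : ∀ t x, 0 < t → 0 < x → (F t (Δ t x).1 (Δ t x).2).1 = x :=
    fun t x ht hx => (hΔ t x ht hx).2.1
  refine ⟨?_, ?_, ?_, ?_, ?_⟩
  · intro t x ht hx
    rw [hu t x hx]
    exact p_bound (hA t x ht hx).1 (hA t x ht hx).2.1 t
  · intro ε t x y hε ht hx hy
    have ht0 := hε.trans_le ht
    have hx0 := hε.trans_le hx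
    have hy0 := hε.trans_le hy
    have := pairF hF hε ht (hA t x ht0 hx0) (hA t y ht0 hy0) (by rwa [hx' t x ht0 hx0])
      (by rwa [hx' t y ht0 hy0])
    rwa [hx' t x ht0 hx0, hx' t y ht0 hy0, ← hu t x hx0, ← hu t y hy0] at this
  · intro t x ht hx
    have hAd := hA t x ht hx
    refine ⟨_, _, hx' t x ht hx, (hu t x hx).symm, hAd.1.1, hAd.1.2, p_bound hAd.1 hAd.2.1, ?_⟩
    intro s hs
    have hqs := hAd.2.2 s hs
    refine ⟨hqs, ?_⟩
    simp only at hqs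
    set z := (F s (Δ t x).1 (Δ t x).2).1 with hz
    rw [hu s z hqs]
    set ε := min s z
    have hε : 0 < ε := lt_min hs.1 hqs
    have := pairF hF hε (min_le_left _ _) (hA s z hs.1 hqs)
      (hadm _ (hΔ t x ht hx).1 s (fun r hr => hAd.2.2 r ⟨hr.1, hr.2.trans hs.2⟩))
      (by rw [hx' s z hs.1 hqs]; exact min_le_right _ _) (min_le_right _ _)
    rw [hx' s z hs.1 hqs, ← hz, sub_self, abs_zero, mul_zero] at this
    have := abs_nonpos_iff.1 this
    linarith
  · intro t x ht hx
    have hAd := hA t x ht hx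
    rw [hu t x hx, le_div_iff₀ ht]
    have e := hx' t x ht hx
    set q := fun s => (F s (Δ t x).1 (Δ t x).2).1 with hq
    set p := fun s => (F s (Δ t x).1 (Δ t x).2).2 with hp
    change p t * t ≤ x
    change q t = x at e
    have hanti : ∀ s ∈ Ioo 0 t, p t ≤ p s := by
      intro s hs
      have hm := mono_of (f := fun s => - p s) (f' := fun s => -(-(g' (q s))))
        (fun s => (hAd.1.2 s).neg) (a := s) (b := t)
        (fun r hr => by
          have := g'_nonneg (hAd.2.2 r ⟨hs.1.trans hr.1, hr.2.le⟩).le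
          linarith) (left_mem_Icc.2 hs.2.le) (right_mem_Icc.2 hs.2.le) hs.2.le
      simp only at hm
      linarith
    have hm := mono_of (f := fun s => q s - p t * s) (f' := fun s => p s - p t * 1)
        (fun s => (hAd.1.1 s).sub ((hasDerivAt_id s).const_mul (p t))) (a := 0) (b := t)
        (fun r hr => by linarith [hanti r hr])
        (left_mem_Icc.2 ht.le) (right_mem_Icc.2 ht.le) ht.le
    simp only [mul_zero, sub_zero] at hm
    have h0 : 0 ≤ q 0 := by rcases dset_cases hAd.2.1 with ⟨h, _⟩ | ⟨h, _⟩ <;> linarith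
    linarith
  · intro t x ht hx3
    have hx : 0 < x := by linarith
    have hAd := hA t x ht hx
    rw [hu t x hx]
    have e := hx' t x ht hx
    set q := fun s => (F s (Δ t x).1 (Δ t x).2).1 with hq
    set p := fun s => (F s (Δ t x).1 (Δ t x).2).2 with hp
    change |p t - 2| ≤ _
    change q t = x at e
    have h1 := lip_of_deriv hAd.1.1 (p_bound hAd.1 hAd.2.1) t 0
    have h2 := lip_of_deriv hAd.1.2 (C := 8) (fun s => by rw [abs_neg]; exact g'_abs _) t 0
    rw [sub_zero, abs_of_pos ht, e] at h1
    rw [sub_zero, abs_of_pos ht] at h2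
    have h3 := (abs_le.1 h1).2
    have hp0 : p 0 = 2 := by
      rcases dset_cases hAd.2.1 with ⟨_, h⟩ | ⟨h, _⟩
      · exact h
      · linarith
    rwa [hp0] at h2


lemma Good.lipt {u : ℝ → ℝ → ℝ} (hu : Good u) {ε s t x : ℝ} (hε : 0 < ε) (hs : ε ≤ s) (hst : s ≤ t)
    (hx : ε ≤ x) : |u t x - u s x| ≤ (44 + 60 / ε) * (t - s) := by
  have hs0 := hε.trans_le hs
  have ht0 := hs0.trans_le hst
  have hx0 := hε.trans_le hx
  have hd := sub_nonneg.2 hst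
  have e60 : 60 / ε = 60 * (1 / ε) := by ring
  have hi : 0 < 1 / ε := by positivity
  by_cases hc : 3 * (t - s) ≤ ε / 2
  · obtain ⟨q, p, hq, hp, hqd, hpd, hpb, hc2⟩ := hu.char t x ht0 hx0
    have h1 := lip_of_deriv hqd hpb t s
    have h2 := lip_of_deriv hpd (C := 8) (fun s => by rw [abs_neg]; exact g'_abs _) t s
    rw [abs_of_nonneg hd] at h1 h2
    rw [hq] at h1
    rw [hp] at h2
    obtain ⟨h3, h4⟩ := hc2 s ⟨hs0, hst⟩
    have h5 := (abs_le.1 h1).2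
    have h6 := hu.lipx (ε / 2) s (q s) x (by linarith) (by linarith) (by linarith) (by linarith)
    rw [h4] at h6
    rw [abs_sub_comm x] at h1
    have e8 : 4 / (ε / 2) = 8 * (1 / ε) := by field_simp; norm_num
    rw [e8] at h6
    have h7 : (12 + 8 * (1 / ε)) * |q s - x| ≤ (12 + 8 * (1 / ε)) * (3 * (t - s)) :=
      mul_le_mul_of_nonneg_left h1 (by linarith)
    calc |u t x - u s x| = |(u t x - p s) + (p s - u s x)| := by congr 1; ring
      _ ≤ |u t x - p s| + |p s - u s x| := abs_add_le _ _
      _ ≤ 8 * (t - s) + (12 + 8 * (1 / ε)) * (3 * (t - s)) := by linarith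
      _ ≤ (44 + 60 / ε) * (t - s) := by
        rw [e60]; nlinarith [mul_nonneg hi.le hd]
  · push Not at hc
    have h1 := hu.bd t x ht0 hx0
    have h2 := hu.bd s x hs0 hx0
    have h3 : |u t x - u s x| ≤ 6 := (abs_sub _ _).trans (by linarith)
    have h4 : 6 ≤ 36 * (1 / ε) * (t - s) := by
      have : ε * (1 / ε) = 1 := by field_simp
      nlinarith
    rw [e60]; nlinarith [mul_nonneg hi.le hd]

/-- truncated function -/
noncomputable def trunc (u : ℝ → ℝ → ℝ) (ε : ℝ) (z : ℝ × ℝ) : ℝ := u (max ε z.1) (max ε z.2)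

lemma Good.trunc_lip {u : ℝ → ℝ → ℝ} (hu : Good u) {ε : ℝ} (hε : 0 < ε) :
    ∃ C : NNReal, LipschitzWith C (trunc u ε) := by
  refine ⟨⟨(44 + 60 / ε) + (12 + 4 / ε), by positivity⟩, LipschitzWith.of_dist_le_mul ?_⟩
  intro z w
  simp only [trunc]
  rw [Real.dist_eq]
  have h1 : |max ε z.1 - max ε w.1| ≤ dist z w := by
    refine (abs_max_sub_max_le_abs z.1 w.1 ε |>.trans' ?_).trans (by rw [← Real.dist_eq]; exact le_max_left _ _)
    rw [max_comm ε, max_comm ε]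
  have h2 : |max ε z.2 - max ε w.2| ≤ dist z w := by
    refine (abs_max_sub_max_le_abs z.2 w.2 ε |>.trans' ?_).trans (by rw [← Real.dist_eq]; exact le_max_right _ _)
    rw [max_comm ε, max_comm ε]
  have a : ε ≤ max ε z.1 := le_max_left _ _
  have b : ε ≤ max ε z.2 := le_max_left _ _
  have c : ε ≤ max ε w.1 := le_max_left _ _
  have d : ε ≤ max ε w.2 := le_max_left _ _
  have ht : |u (max ε z.1) (max ε z.2) - u (max ε w.1) (max ε z.2)|
      ≤ (44 + 60 / ε) * |max ε z.1 - max ε w.1| := by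
    rcases le_total (max ε w.1) (max ε z.1) with h | h
    · rw [abs_of_nonneg (sub_nonneg.2 h)]; exact hu.lipt hε c h b
    · rw [abs_sub_comm, abs_sub_comm (max ε z.1), abs_of_nonneg (sub_nonneg.2 h)]
      exact hu.lipt hε a h b
  have hx := hu.lipx ε (max ε w.1) (max ε z.2) (max ε w.2) hε c b d
  have k1 : (44 + 60 / ε) * |max ε z.1 - max ε w.1| ≤ (44 + 60 / ε) * dist z w :=
    mul_le_mul_of_nonneg_left h1 (by positivity)
  have k2 : (12 + 4 / ε) * |max ε z.2 - max ε w.2| ≤ (12 + 4 / ε) * dist z w :=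
    mul_le_mul_of_nonneg_left h2 (by positivity)
  calc _ = |(u (max ε z.1) (max ε z.2) - u (max ε w.1) (max ε z.2)) +
        (u (max ε w.1) (max ε z.2) - u (max ε w.1) (max ε w.2))| := by congr 1; ring
    _ ≤ _ := abs_add_le _ _
    _ ≤ ((44 + 60 / ε) + (12 + 4 / ε)) * dist z w := by linarith

lemma trunc_eq {u : ℝ → ℝ → ℝ} {ε t x : ℝ} (ht : ε ≤ t) (hx : ε ≤ x) : trunc u ε (t, x) = u t x := by
  simp [trunc, max_eq_right ht, max_eq_right hx]

lemma Good.trunc_bd {u : ℝ → ℝ → ℝ} (hu : Good u) {ε : ℝ} (hε : 0 < ε) (z : ℝ × ℝ) :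
    |trunc u ε z| ≤ 3 :=
  hu.bd _ _ (hε.trans_le (le_max_left _ _)) (hε.trans_le (le_max_left _ _))

lemma slice1 {v : ℝ × ℝ → ℝ} {t x : ℝ} {D : ℝ × ℝ →L[ℝ] ℝ} (h : HasFDerivAt v D (t, x)) :
    HasDerivAt (fun s => v (s, x)) (D (1, 0)) t := by
  have h1 : HasDerivAt (fun s : ℝ => (s, x)) ((1:ℝ), (0:ℝ)) t :=
    (hasDerivAt_id t).prodMk (hasDerivAt_const t x)
  exact h.comp_hasDerivAt t h1

lemma slice2 {v : ℝ × ℝ → ℝ} {t x : ℝ} {D : ℝ × ℝ →L[ℝ] ℝ} (h : HasFDerivAt v D (t, x)) :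
    HasDerivAt (fun y => v (t, y)) (D (0, 1)) x := by
  have h1 : HasDerivAt (fun y : ℝ => (t, y)) ((0:ℝ), (1:ℝ)) x :=
    (hasDerivAt_const x t).prodMk (hasDerivAt_id x)
  exact h.comp_hasDerivAt x h1

lemma Good.pde {u : ℝ → ℝ → ℝ} (hu : Good u) {ε t x : ℝ} (hε : 0 < ε) (ht : ε < t) (hx : ε < x)
    {D : ℝ × ℝ →L[ℝ] ℝ} (h : HasFDerivAt (trunc u ε) D (t, x)) :
    D (1, 0) + u t x * D (0, 1) = - g' x := by
  obtain ⟨q, p, hq, hp, hqd, hpd, hpb, hc⟩ := hu.char t x (hε.trans ht) (hε.trans hx)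
  have h1 : HasDerivAt (fun s : ℝ => (s, q s)) ((1:ℝ), p t) t :=
    (hasDerivAt_id t).prodMk (hqd t)
  rw [← hq] at h
  have h2 : HasDerivAt (fun s => trunc u ε (s, q s)) (D (1, p t)) t :=
    HasFDerivAt.comp_hasDerivAt (l := trunc u ε) (f := fun s : ℝ => (s, q s)) t h h1
  have hqc : ContinuousAt q t := (hqd t).continuousAt
  have hev : ∀ᶠ s in 𝓝 t, ε < s ∧ ε < q s :=
    (eventually_gt_nhds ht).and (hqc.eventually (lt_mem_nhds (by rwa [hq])))
  have h3 : HasDerivWithinAt p (D (1, p t)) (Iic t) t := by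
    refine h2.hasDerivWithinAt.congr_of_eventuallyEq ?_ ?_
    · filter_upwards [nhdsWithin_le_nhds hev, self_mem_nhdsWithin] with s hs hs2
      rw [trunc_eq hs.1.le hs.2.le]
      exact (hc s ⟨hε.trans hs.1, hs2⟩).2.symm
    · rw [trunc_eq ht.le (by rw [hq]; exact hx.le)]
      exact (hc t ⟨hε.trans ht, le_rfl⟩).2.symm
  have h4 := (uniqueDiffOn_Iic t t (mem_Iic.2 le_rfl)).eq_deriv _ h3 (hpd t).hasDerivWithinAt
  rw [hq, hp] at h4
  rw [← h4]
  have : ((1:ℝ), u t x) = (1, 0) + u t x • ((0:ℝ), (1:ℝ)) := by simp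
  rw [this, map_add, map_smul, smul_eq_mul]

lemma abs_chain {w : ℝ → ℝ} {w' k a : ℝ} (hw : HasDerivAt w w' a)
    (hf : DifferentiableAt ℝ (fun s => |w s - k|) a) :
    HasDerivAt (fun s => |w s - k|) (Real.sign (w a - k) * w') a := by
  have hw2 := hw.sub_const k
  rcases lt_trichotomy (w a - k) 0 with h | h | h
  · rw [Real.sign_of_neg h]
    exact (hasDerivAt_abs_neg h).comp a hw2
  · rw [h, Real.sign_zero, zero_mul]
    have hm : IsLocalMin (fun s => |w s - k|) a := by
      refine Eventually.of_forall fun s => ?_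
      simp only [h, abs_zero]; exact abs_nonneg _
    rw [← hm.deriv_eq_zero]
    exact hf.hasDerivAt
  · rw [Real.sign_of_pos h]
    exact (hasDerivAt_abs_pos h).comp a hw2

lemma sign_mul_self' (a : ℝ) : Real.sign a * a = |a| := by
  rcases lt_trichotomy a 0 with h | h | h
  · rw [Real.sign_of_neg h, abs_of_neg h]; ring
  · simp [h]
  · rw [Real.sign_of_pos h, abs_of_pos h]; ring

/-- flux -/
noncomputable def Qf (k v : ℝ) : ℝ := |v - k| * (v + k) / 2

lemma Qf_eq (k v : ℝ) : Real.sign (v - k) * (v ^ 2 / 2 - k ^ 2 / 2) = Qf k v := by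
  unfold Qf; rw [← sign_mul_self']; ring

lemma Good.pointwise {u : ℝ → ℝ → ℝ} (hu : Good u) {ε t x : ℝ} (hε : 0 < ε) (ht : ε < t) (hx : ε < x)
    (k : ℝ) (h : DifferentiableAt ℝ (trunc u ε) (t, x))
    (h' : DifferentiableAt ℝ (fun z => |trunc u ε z - k|) (t, x))
    {φ : ℝ → ℝ → ℝ} (hφ : ContDiff ℝ (⊤ : ℕ∞) (fun z : ℝ × ℝ => φ z.1 z.2)) :
    deriv (fun s => |trunc u ε (s, x) - k| * φ s x) t
     + deriv (fun y => Qf k (trunc u ε (t, y)) * φ t y) x =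
    |u t x - k| * deriv (fun s => φ s x) t
                + Real.sign (u t x - k)
                    * ((u t x) ^ 2 / 2 - k ^ 2 / 2) * deriv (fun y => φ t y) x
                - Real.sign (u t x - k) * g' x * φ t x := by
  have hp := hu.pde hε ht hx h.hasFDerivAt
  have hφd : DifferentiableAt ℝ (fun z : ℝ × ℝ => φ z.1 z.2) (t, x) :=
    hφ.contDiffAt.differentiableAt (by simp)
  have d1 := slice1 h.hasFDerivAt
  have d2 := slice2 h.hasFDerivAt
  have f1 := slice1 hφd.hasFDerivAt
  have f2 := slice2 hφd.hasFDerivAt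
  have a1 := abs_chain (k := k) d1 (slice1 h'.hasFDerivAt).differentiableAt
  have a2 := abs_chain (k := k) d2 (slice2 h'.hasFDerivAt).differentiableAt
  have b1 := a1.mul f1
  have b2 := ((a2.mul (d2.add_const k)).div_const 2).mul f2
  rw [trunc_eq ht.le hx.le] at a1 a2 b1 b2
  have c1 : deriv (fun s => |trunc u ε (s, x) - k| * φ s x) t = _ := b1.deriv
  have c2 : deriv (fun y => Qf k (trunc u ε (t, y)) * φ t y) x = _ := b2.deriv
  rw [c1, c2, f1.deriv, f2.deriv]
  simp only [Pi.mul_apply]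
  rw [trunc_eq ht.le hx.le, Qf_eq, Qf]
  have e := sign_mul_self' (u t x - k)
  rw [← e]
  linear_combination (Real.sign (u t x - k) * φ t x) * hp


lemma ftc_Ioi {h : ℝ → ℝ} {C : NNReal} (hL : LipschitzWith C h) {a R : ℝ}
    (hR : ∀ x, R < x → h x = 0) : ∫ x in Ioi a, deriv h x = - h a := by
  set b := max a R + 1 with hb
  have hab : a ≤ b := by have := le_max_left a R; linarith
  have hRb : R < b := by have := le_max_right a R; linarith
  have h1 := (hL.lipschitzOnWith (s := uIcc a b)).absolutelyContinuousOnInterval.integral_deriv_eq_sub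
  rw [intervalIntegral.integral_of_le hab, hR b hRb, zero_sub] at h1
  rw [← h1]
  apply setIntegral_eq_of_subset_of_forall_sdiff_eq_zero measurableSet_Ioi
  · exact Ioc_subset_Ioi_self
  · intro x hx
    have hxb : b < x := by
      by_contra hc
      exact hx.2 ⟨hx.1, not_lt.1 hc⟩
    have : h =ᶠ[𝓝 x] fun _ => 0 := by
      filter_upwards [Ioi_mem_nhds (hRb.trans hxb)] with y hy using hR y hy
    rw [this.deriv_eq]; simp

/-- support in a box -/
def Box (R : ℝ) (P : ℝ × ℝ → ℝ) : Prop := ∀ z : ℝ × ℝ, (R < |z.1| ∨ R < |z.2|) → P z = 0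

lemma integrable_box {P : ℝ × ℝ → ℝ} {S : Set (ℝ × ℝ)} {R C : ℝ} (hS : MeasurableSet S)
    (hm : AEStronglyMeasurable P ((volume : Measure (ℝ × ℝ)).restrict S)) (hR : Box R P)
    (hC : ∀ z ∈ S, |P z| ≤ C) : IntegrableOn P S := by
  have hfin : (volume : Measure (ℝ × ℝ)) (Icc (-R) R ×ˢ Icc (-R) R) < ⊤ :=
    (isCompact_Icc.prod isCompact_Icc).measure_lt_top
  have hms : MeasurableSet (Icc (-R) R ×ˢ Icc (-R) R) := measurableSet_Icc.prod measurableSet_Icc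
  have hsupp : Function.support P ⊆ Icc (-R) R ×ˢ Icc (-R) R := by
    intro z hz
    by_contra hc
    apply hz
    apply hR
    by_contra h2
    push Not at h2
    exact hc ⟨abs_le.1 h2.1, abs_le.1 h2.2⟩
  unfold IntegrableOn
  rw [← integrableOn_iff_integrable_of_support_subset hsupp]
  refine Measure.integrableOn_of_bounded (M := C) ?_ hm ?_
  · exact (lt_of_le_of_lt (Measure.restrict_le_self _) hfin).ne
  · have : ∀ᵐ z ∂((volume : Measure (ℝ × ℝ)).restrict S), ‖P z‖ ≤ C :=
      (ae_restrict_iff' hS).2 (Eventually.of_forall hC)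
    exact ae_restrict_of_ae this

lemma box_deriv2 {P : ℝ × ℝ → ℝ} {R : ℝ} (hR : Box R P) :
    Box R (fun z => deriv (fun y => P (z.1, y)) z.2) := by
  intro z hz
  have : (fun y => P (z.1, y)) =ᶠ[𝓝 z.2] fun _ => 0 := by
    rcases hz with h | h
    · exact Eventually.of_forall fun y => hR _ (Or.inl h)
    · have : ∀ᶠ y in 𝓝 z.2, R < |y| := continuous_abs.continuousAt.eventually (lt_mem_nhds h)
      filter_upwards [this] with y hy using hR _ (Or.inr hy)
  simp only [this.deriv_eq]; simp

lemma ibp2 {P : ℝ × ℝ → ℝ} {C : NNReal} {R : ℝ} (hL : LipschitzWith C P) (hR : Box R P) (ε : ℝ) :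
    IntegrableOn (fun z => deriv (fun y => P (z.1, y)) z.2) (Ioi ε ×ˢ Ioi ε) ∧
    ∫ z in Ioi ε ×ˢ Ioi ε, deriv (fun y => P (z.1, y)) z.2 = - ∫ t in Ioi ε, P (t, ε) := by
  have hLs : ∀ t, LipschitzWith C (fun y => P (t, y)) := by
    intro t
    refine LipschitzWith.of_dist_le_mul fun x y => ?_
    refine (hL.dist_le_mul _ _).trans ?_
    simp [Prod.dist_eq]
  have hm : Measurable (fun z : ℝ × ℝ => deriv (fun y => P (z.1, y)) z.2) :=
    measurable_deriv_with_param (f := fun t y => P (t, y)) hL.continuous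
  have hI : IntegrableOn (fun z : ℝ × ℝ => deriv (fun y => P (z.1, y)) z.2) (Ioi ε ×ˢ Ioi ε) := by
    refine integrable_box (C := C) (measurableSet_Ioi.prod measurableSet_Ioi)
      hm.aestronglyMeasurable (box_deriv2 hR) ?_
    intro z _
    exact norm_deriv_le_of_lipschitz (hLs z.1)
  refine ⟨hI, ?_⟩
  rw [Measure.volume_eq_prod] at hI ⊢
  rw [setIntegral_prod _ hI, ← integral_neg]
  congr 1
  funext t
  exact ftc_Ioi (hLs t) (R := R) fun x hx => hR _ (Or.inr (lt_of_lt_of_le hx (le_abs_self x)))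

lemma ibp1 {P : ℝ × ℝ → ℝ} {C : NNReal} {R : ℝ} (hL : LipschitzWith C P) (hR : Box R P) (ε : ℝ) :
    IntegrableOn (fun z => deriv (fun s => P (s, z.2)) z.1) (Ioi ε ×ˢ Ioi ε) ∧
    ∫ z in Ioi ε ×ˢ Ioi ε, deriv (fun s => P (s, z.2)) z.1 = - ∫ x in Ioi ε, P (ε, x) := by
  have hL' : LipschitzWith C (fun z : ℝ × ℝ => P z.swap) := by
    refine LipschitzWith.of_dist_le_mul fun x y => ?_
    refine (hL.dist_le_mul _ _).trans ?_
    simp only [Prod.dist_eq, Prod.fst_swap, Prod.snd_swap]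
    rw [max_comm]
  have hR' : Box R (fun z : ℝ × ℝ => P z.swap) := fun z hz => hR _ (Or.symm hz)
  obtain ⟨h1, h2⟩ := ibp2 hL' hR' ε
  constructor
  · have := h1.swap
    exact this
  · rw [Measure.volume_eq_prod] at h2 ⊢
    rw [← setIntegral_prod_swap]
    exact h2

lemma lip_mul {a b : ℝ × ℝ → ℝ} {A B : NNReal} {M N : ℝ} (hM : 0 ≤ M) (hN : 0 ≤ N)
    (ha : LipschitzWith A a) (hb : LipschitzWith B b)
    (ba : ∀ z, |a z| ≤ M) (bb : ∀ z, |b z| ≤ N) : ∃ C : NNReal, LipschitzWith C (fun z => a z * b z) := by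
  refine ⟨⟨M * B + N * A, by positivity⟩, LipschitzWith.of_dist_le_mul fun x y => ?_⟩
  have h1 := ha.dist_le_mul x y
  have h2 := hb.dist_le_mul x y
  rw [Real.dist_eq] at h1 h2 ⊢
  calc |a x * b x - a y * b y| = |a x * (b x - b y) + b y * (a x - a y)| := by congr 1; ring
    _ ≤ |a x| * |b x - b y| + |b y| * |a x - a y| := by
      rw [← abs_mul, ← abs_mul]; exact abs_add_le _ _
    _ ≤ M * (B * dist x y) + N * (A * dist x y) := by
      gcongr
      · exact ba x
      · exact bb y
    _ = (M * B + N * A) * dist x y := by ring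
    _ = _ := rfl

/-- the Kruzhkov integrand -/
noncomputable def Gint (u φ : ℝ → ℝ → ℝ) (k : ℝ) (z : ℝ × ℝ) : ℝ :=
  |u z.1 z.2 - k| * deriv (fun s => φ s z.2) z.1
                + Real.sign (u z.1 z.2 - k)
                    * ((u z.1 z.2) ^ 2 / 2 - k ^ 2 / 2) * deriv (fun y => φ z.1 y) z.2
                - Real.sign (u z.1 z.2 - k) * g' z.2 * φ z.1 z.2

/-- test functions -/
structure Test (φ : ℝ → ℝ → ℝ) : Prop where
  smooth : ContDiff ℝ (⊤ : ℕ∞) (fun z : ℝ × ℝ => φ z.1 z.2)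
  cpt : HasCompactSupport (fun z : ℝ × ℝ => φ z.1 z.2)
  nonneg : ∀ t x, 0 ≤ φ t x

lemma Test.box {φ : ℝ → ℝ → ℝ} (h : Test φ) : ∃ R, 0 < R ∧ Box R (fun z => φ z.1 z.2) := by
  obtain ⟨R, hR⟩ := h.cpt.isCompact.isBounded.subset_closedBall (0 : ℝ × ℝ)
  refine ⟨max R 1, by positivity, ?_⟩
  intro z hz
  apply image_eq_zero_of_notMem_tsupport (f := fun z : ℝ × ℝ => φ z.1 z.2)
  intro hc
  have := hR hc
  rw [mem_closedBall_zero_iff, Prod.norm_def, max_le_iff] at this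
  have h3 := le_max_left R 1
  simp only [Real.norm_eq_abs] at this
  rcases hz with h | h <;> linarith [this.1, this.2]

lemma Test.lip {φ : ℝ → ℝ → ℝ} (h : Test φ) : ∃ C, LipschitzWith C (fun z : ℝ × ℝ => φ z.1 z.2) :=
  ContDiff.lipschitzWith_of_hasCompactSupport h.cpt h.smooth (by simp)

lemma Test.bdd {φ : ℝ → ℝ → ℝ} (h : Test φ) : ∃ C, 0 ≤ C ∧ ∀ t x, |φ t x| ≤ C := by
  obtain ⟨C, hC⟩ := h.cpt.exists_bound_of_continuous h.smooth.continuous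
  exact ⟨max C 0, le_max_right _ _, fun t x => (hC (t, x)).trans (le_max_left _ _)⟩

lemma lip_abs_sub {v : ℝ × ℝ → ℝ} {C : NNReal} (h : LipschitzWith C v) (k : ℝ) :
    LipschitzWith C (fun z => |v z - k|) := by
  refine LipschitzWith.of_dist_le_mul fun x y => ?_
  refine le_trans ?_ (h.dist_le_mul x y)
  rw [Real.dist_eq, Real.dist_eq]
  refine (abs_abs_sub_abs_le_abs_sub _ _).trans ?_
  simp

lemma Good.identity {u : ℝ → ℝ → ℝ} (hu : Good u) {φ : ℝ → ℝ → ℝ} (hφ : Test φ) (k : ℝ) {ε : ℝ}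
    (hε : 0 < ε) :
    ∫ z in Ioi ε ×ˢ Ioi ε, Gint u φ k z =
      - (∫ x in Ioi ε, |u ε x - k| * φ ε x) - ∫ t in Ioi ε, Qf k (u t ε) * φ t ε := by
  obtain ⟨C, hC⟩ := hu.trunc_lip hε
  obtain ⟨L, hL⟩ := hφ.lip
  obtain ⟨M, hM0, hM⟩ := hφ.bdd
  obtain ⟨R, hR0, hR⟩ := hφ.box
  have hv := hu.trunc_bd hε
  have hfL := lip_abs_sub hC k
  have hfb : ∀ z, |(|trunc u ε z - k|)| ≤ 3 + |k| := fun z => by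
    rw [abs_abs]; exact (abs_sub _ _).trans (by linarith [hv z])
  obtain ⟨C1, hC1⟩ := lip_mul (by positivity) hM0 hfL hL hfb (fun z => hM z.1 z.2)
  have hgL : LipschitzWith C (fun z => trunc u ε z + k) := by
    refine LipschitzWith.of_dist_le_mul fun x y => ?_
    refine le_trans ?_ (hC.dist_le_mul x y)
    simp
  have hgb : ∀ z, |trunc u ε z + k| ≤ 3 + |k| := fun z =>
    (abs_add_le _ _).trans (by linarith [hv z])
  obtain ⟨C2, hC2⟩ := lip_mul (by positivity) (by positivity) hfL hgL hfb hgb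
  have hhalf : LipschitzWith 0 (fun _ : ℝ × ℝ => (1 / 2 : ℝ)) := LipschitzWith.const _
  obtain ⟨C3, hC3⟩ := lip_mul (M := (3 + |k|) * (3 + |k|)) (N := 1) (by positivity) zero_le_one hC2 hhalf
    (fun z => by
      rw [abs_mul]; exact mul_le_mul (hfb z) (hgb z) (abs_nonneg _) (by positivity))
    (fun z => by norm_num [abs_of_pos])
  have hQ : (fun z => |trunc u ε z - k| * (trunc u ε z + k) * (1 / 2)) = fun z => Qf k (trunc u ε z) := by
    funext z; unfold Qf; ring
  rw [hQ] at hC3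
  have hQb : ∀ z, |Qf k (trunc u ε z)| ≤ (3 + |k|) * (3 + |k|) := by
    intro z
    unfold Qf
    rw [abs_div, abs_mul, abs_two]
    have := mul_le_mul (hfb z) (hgb z) (abs_nonneg _) (by positivity)
    have h0 : 0 ≤ |(|trunc u ε z - k|)| * |trunc u ε z + k| := by positivity
    linarith
  obtain ⟨C4, hC4⟩ := lip_mul (by positivity) hM0 hC3 hL hQb (fun z => hM z.1 z.2)
  have hB1 : Box R (fun z => |trunc u ε z - k| * φ z.1 z.2) := fun z hz => by
    simp only [hR z hz, mul_zero]
  have hB2 : Box R (fun z => Qf k (trunc u ε z) * φ z.1 z.2) := fun z hz => by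
    simp only [hR z hz, mul_zero]
  obtain ⟨i1, e1⟩ := ibp1 hC1 hB1 ε
  obtain ⟨i2, e2⟩ := ibp2 hC4 hB2 ε
  have hae : ∀ᵐ z ∂((volume : Measure (ℝ × ℝ)).restrict (Ioi ε ×ˢ Ioi ε)), Gint u φ k z =
      deriv (fun s => |trunc u ε (s, z.2) - k| * φ s z.2) z.1
      + deriv (fun y => Qf k (trunc u ε (z.1, y)) * φ z.1 y) z.2 := by
    rw [ae_restrict_iff' (measurableSet_Ioi.prod measurableSet_Ioi)]
    filter_upwards [hC.ae_differentiableAt (μ := volume), hfL.ae_differentiableAt (μ := volume)]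
      with z h1 h2 hz
    exact (hu.pointwise hε hz.1 hz.2 k h1 h2 hφ.smooth).symm
  rw [integral_congr_ae hae]
  rw [integral_add i1 i2, e1, e2]
  have j1 : ∫ x in Ioi ε, |trunc u ε (ε, x) - k| * φ ε x = ∫ x in Ioi ε, |u ε x - k| * φ ε x := by
    apply setIntegral_congr_fun measurableSet_Ioi
    intro x hx
    simp only [trunc_eq (le_refl ε) (le_of_lt hx)]
  have j2 : ∫ t in Ioi ε, Qf k (trunc u ε (t, ε)) * φ t ε = ∫ t in Ioi ε, Qf k (u t ε) * φ t ε := by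
    apply setIntegral_congr_fun measurableSet_Ioi
    intro x hx
    simp only [trunc_eq (le_of_lt hx) (le_refl ε)]
  simp only [j1, j2]
  ring


lemma int1 {w : ℝ → ℝ} {ε C R : ℝ} (hC : 0 ≤ C)
    (hm : AEStronglyMeasurable w (volume.restrict (Ioi ε))) (hb : ∀ x, ε < x → |w x| ≤ C)
    (hR : ∀ x, R < x → w x = 0) : IntegrableOn w (Ioi ε) := by
  have hbi : IntegrableOn ((Iic R).indicator fun _ => C) (Ioi ε) := by
    rw [integrableOn_indicator_iff measurableSet_Iic, inter_comm, Ioi_inter_Iic]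
    exact integrableOn_const measure_Ioc_lt_top.ne
  refine Integrable.mono' hbi hm ?_
  rw [ae_restrict_iff' measurableSet_Ioi]
  refine Eventually.of_forall fun x hx => ?_
  by_cases h : x ≤ R
  · rw [indicator_of_mem (show x ∈ Iic R from h)]; exact hb x hx
  · rw [hR x (not_le.1 h), norm_zero]; exact indicator_nonneg (fun _ _ => hC) _

lemma dct1 {w : ℝ → ℝ → ℝ} {w0 : ℝ → ℝ} {C R : ℝ} (hC : 0 ≤ C)
    (hm : ∀ ε, 0 < ε → AEStronglyMeasurable (w ε) (volume.restrict (Ioi ε)))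
    (hb : ∀ ε x, 0 < ε → ε < x → |w ε x| ≤ C)
    (hR : ∀ ε x, R < x → w ε x = 0)
    (hl : ∀ x, 0 < x → Tendsto (fun ε => w ε x) (𝓝[>] 0) (𝓝 (w0 x))) :
    Tendsto (fun ε => ∫ x in Ioi ε, w ε x) (𝓝[>] 0) (𝓝 (∫ x in Ioi 0, w0 x)) := by
  have hbi : IntegrableOn ((Iic R).indicator fun _ => C) (Ioi 0) := by
    rw [integrableOn_indicator_iff measurableSet_Iic, inter_comm, Ioi_inter_Iic]
    exact integrableOn_const measure_Ioc_lt_top.ne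
  have key : Tendsto (fun ε => ∫ x in Ioi 0, (Ioi ε).indicator (w ε) x) (𝓝[>] 0)
      (𝓝 (∫ x in Ioi 0, w0 x)) := by
    refine tendsto_integral_filter_of_dominated_convergence _ ?_ ?_ hbi ?_
    · filter_upwards [self_mem_nhdsWithin] with ε hε
      exact ((aestronglyMeasurable_indicator_iff measurableSet_Ioi).2 (hm ε hε)).restrict
    · filter_upwards [self_mem_nhdsWithin] with ε hε
      refine Eventually.of_forall fun x => ?_
      by_cases hx : x ∈ Ioi ε
      · rw [indicator_of_mem hx]
        by_cases h : x ≤ R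
        · rw [indicator_of_mem (show x ∈ Iic R from h)]; exact hb ε x hε hx
        · rw [hR ε x (not_le.1 h), norm_zero]; exact indicator_nonneg (fun _ _ => hC) _
      · rw [indicator_of_notMem hx, norm_zero]; exact indicator_nonneg (fun _ _ => hC) _
    · rw [ae_restrict_iff' measurableSet_Ioi]
      refine Eventually.of_forall fun x hx => ?_
      refine (hl x hx).congr' ?_
      filter_upwards [nhdsWithin_le_nhds (Iio_mem_nhds (show (0:ℝ) < x from hx))] with ε hε
      rw [indicator_of_mem (show x ∈ Ioi ε from hε)]
  refine key.congr' ?_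
  filter_upwards [self_mem_nhdsWithin] with ε hε
  rw [setIntegral_indicator measurableSet_Ioi, Ioi_inter_Ioi, max_eq_right (le_of_lt hε)]

lemma meas_sign : Measurable Real.sign := by
  unfold Real.sign
  exact Measurable.ite measurableSet_Iio measurable_const
    (Measurable.ite measurableSet_Ioi measurable_const measurable_const)

lemma sign_abs_le (a : ℝ) : |Real.sign a| ≤ 1 := by
  rcases Real.sign_apply_eq a with h | h | h <;> rw [h] <;> simp

lemma Good.cont {u : ℝ → ℝ → ℝ} (hu : Good u) :
    ContinuousOn (fun z : ℝ × ℝ => u z.1 z.2) (Ioi 0 ×ˢ Ioi 0) := by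
  intro z hz
  obtain ⟨h1, h2⟩ : 0 < z.1 ∧ 0 < z.2 := hz
  set ε := min z.1 z.2 / 2 with hε
  have hm := lt_min h1 h2
  have hε0 : 0 < ε := by positivity
  have e1 : ε < z.1 := by have := min_le_left z.1 z.2; linarith
  have e2 : ε < z.2 := by have := min_le_right z.1 z.2; linarith
  obtain ⟨C, hC⟩ := hu.trunc_lip hε0
  refine ContinuousAt.continuousWithinAt ?_
  refine hC.continuous.continuousAt.congr ?_
  have hev : ∀ᶠ w in 𝓝 z, ε < w.1 ∧ ε < w.2 :=
    (continuous_fst.continuousAt.eventually (lt_mem_nhds e1)).and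
      (continuous_snd.continuousAt.eventually (lt_mem_nhds e2))
  filter_upwards [hev] with w hw
  exact trunc_eq hw.1.le hw.2.le

lemma Test.dmeas2 {φ : ℝ → ℝ → ℝ} (h : Test φ) :
    Measurable (fun z : ℝ × ℝ => deriv (fun y => φ z.1 y) z.2) :=
  measurable_deriv_with_param (f := φ) h.smooth.continuous

lemma Test.dmeas1 {φ : ℝ → ℝ → ℝ} (h : Test φ) :
    Measurable (fun z : ℝ × ℝ => deriv (fun s => φ s z.2) z.1) := by
  have := measurable_deriv_with_param (f := fun x s => φ s x)
    (h.smooth.continuous.comp continuous_swap)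
  exact this.comp measurable_swap

lemma Test.dbd {φ : ℝ → ℝ → ℝ} (h : Test φ) : ∃ L : ℝ, 0 ≤ L ∧
    (∀ t x, |deriv (fun y => φ t y) x| ≤ L) ∧ (∀ t x, |deriv (fun s => φ s x) t| ≤ L) := by
  obtain ⟨L, hL⟩ := h.lip
  refine ⟨L, L.2, fun t x => ?_, fun t x => ?_⟩
  · refine norm_deriv_le_of_lipschitz (f := fun y => φ t y) (C := L)
      (LipschitzWith.of_dist_le_mul fun a b => ?_)
    refine (hL.dist_le_mul (t, a) (t, b)).trans ?_
    simp [Prod.dist_eq]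
  · refine norm_deriv_le_of_lipschitz (f := fun s => φ s x) (C := L)
      (LipschitzWith.of_dist_le_mul fun a b => ?_)
    refine (hL.dist_le_mul (a, x) (b, x)).trans ?_
    simp [Prod.dist_eq]

lemma Qf_bd {k v : ℝ} (hv : |v| ≤ 3) : |Qf k v| ≤ (3 + |k|) * (3 + |k|) := by
  unfold Qf
  rw [abs_div, abs_mul, abs_two, abs_abs]
  have h1 : |v - k| ≤ 3 + |k| := (abs_sub _ _).trans (by linarith)
  have h2 : |v + k| ≤ 3 + |k| := (abs_add_le _ _).trans (by linarith)
  have := mul_le_mul h1 h2 (abs_nonneg _) (by positivity)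
  have h0 : 0 ≤ |v - k| * |v + k| := by positivity
  linarith

lemma Gint_box {u φ : ℝ → ℝ → ℝ} {k R : ℝ} (hR : Box R (fun z => φ z.1 z.2)) :
    Box R (Gint u φ k) := by
  intro z hz
  have h1 := box_deriv2 hR z hz
  have hR' : Box R (fun z => φ z.2 z.1) := fun z hz => hR z.swap hz.symm
  have h2 := box_deriv2 hR' z.swap hz.symm
  simp only [Prod.fst_swap, Prod.snd_swap] at h1 h2
  have h3 := hR z hz
  simp only at h3
  simp only [Gint, h1, h2, h3, mul_zero, add_zero, sub_zero]

lemma Good.Gint_int {u : ℝ → ℝ → ℝ} (hu : Good u) {φ : ℝ → ℝ → ℝ} (hφ : Test φ) (k : ℝ) :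
    IntegrableOn (Gint u φ k) (Ioi 0 ×ˢ Ioi 0) := by
  obtain ⟨L, hL0, hL2, hL1⟩ := hφ.dbd
  obtain ⟨M, hM0, hM⟩ := hφ.bdd
  obtain ⟨R, hR0, hR⟩ := hφ.box
  have hS : MeasurableSet (Ioi (0:ℝ) ×ˢ Ioi (0:ℝ)) := measurableSet_Ioi.prod measurableSet_Ioi
  refine integrable_box (R := R) (C := (3 + |k|) * L + (3 + |k|) * (3 + |k|) * L + 8 * M) hS ?_
    (Gint_box hR) ?_
  · have hU : AEMeasurable (fun z : ℝ × ℝ => u z.1 z.2)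
        ((volume : Measure (ℝ × ℝ)).restrict (Ioi 0 ×ˢ Ioi 0)) := hu.cont.aemeasurable hS
    have hs := meas_sign.comp_aemeasurable (hU.sub_const k)
    have hg : Measurable fun z : ℝ × ℝ => g' z.2 := g'_cont.measurable.comp measurable_snd
    have hf : Measurable fun z : ℝ × ℝ => φ z.1 z.2 := hφ.smooth.continuous.measurable
    have ha : AEMeasurable (fun z : ℝ × ℝ => |u z.1 z.2 - k|)
        ((volume : Measure (ℝ × ℝ)).restrict (Ioi 0 ×ˢ Ioi 0)) :=
      continuous_abs.measurable.comp_aemeasurable (hU.sub_const k)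
    have := ((ha.mul hφ.dmeas1.aemeasurable).add
      ((hs.mul (((hU.pow_const 2).div_const 2).sub_const (k ^ 2 / 2))).mul
        hφ.dmeas2.aemeasurable)).sub ((hs.mul hg.aemeasurable).mul hf.aemeasurable)
    exact this.aestronglyMeasurable
  · intro z hz
    have hb := hu.bd z.1 z.2 hz.1 hz.2
    unfold Gint
    rw [Qf_eq]
    have h1 : |(|u z.1 z.2 - k|)| ≤ 3 + |k| := by
      rw [abs_abs]; exact (abs_sub _ _).trans (by linarith)
    have h2 := Qf_bd (k := k) hb
    have h3 := sign_abs_le (u z.1 z.2 - k)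
    have h4 := g'_abs z.2
    have k1 : |(|u z.1 z.2 - k|) * deriv (fun s => φ s z.2) z.1| ≤ (3 + |k|) * L := by
      rw [abs_mul]; exact mul_le_mul h1 (hL1 _ _) (abs_nonneg _) (by positivity)
    have k2 : |Qf k (u z.1 z.2) * deriv (fun y => φ z.1 y) z.2| ≤ (3 + |k|) * (3 + |k|) * L := by
      rw [abs_mul]; exact mul_le_mul h2 (hL2 _ _) (abs_nonneg _) (by positivity)
    have k3 : |Real.sign (u z.1 z.2 - k) * g' z.2 * φ z.1 z.2| ≤ 8 * M := by
      rw [abs_mul, abs_mul]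
      refine mul_le_mul ?_ (hM _ _) (abs_nonneg _) (by norm_num)
      have := mul_le_mul h3 h4 (abs_nonneg _) zero_le_one
      linarith
    exact (abs_sub _ _).trans (add_le_add ((abs_add_le _ _).trans (add_le_add k1 k2)) k3)

lemma Good.limA {u : ℝ → ℝ → ℝ} (hu : Good u) {φ : ℝ → ℝ → ℝ} (hφ : Test φ) (k : ℝ) :
    Tendsto (fun ε : ℝ => ∫ z in Ioi ε ×ˢ Ioi ε, Gint u φ k z) (𝓝[>] 0)
      (𝓝 (∫ z in Ioi 0 ×ˢ Ioi 0, Gint u φ k z)) := by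
  have hI := hu.Gint_int hφ k
  have hms : ∀ ε : ℝ, MeasurableSet (Ioi ε ×ˢ Ioi ε) := fun ε =>
    measurableSet_Ioi.prod measurableSet_Ioi
  have key : Tendsto (fun ε : ℝ => ∫ z in Ioi 0 ×ˢ Ioi 0, (Ioi ε ×ˢ Ioi ε).indicator (Gint u φ k) z)
      (𝓝[>] 0) (𝓝 (∫ z in Ioi 0 ×ˢ Ioi 0, Gint u φ k z)) := by
    refine tendsto_integral_filter_of_dominated_convergence (fun z => ‖Gint u φ k z‖) ?_ ?_ hI.norm ?_
    · exact Eventually.of_forall fun ε => hI.aestronglyMeasurable.indicator (hms ε)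
    · exact Eventually.of_forall fun ε => Eventually.of_forall fun z => norm_indicator_le_norm_self _ _
    · rw [ae_restrict_iff' (hms 0)]
      refine Eventually.of_forall fun z hz => ?_
      obtain ⟨h1, h2⟩ : 0 < z.1 ∧ 0 < z.2 := hz
      refine tendsto_const_nhds.congr' ?_
      filter_upwards [nhdsWithin_le_nhds (Iio_mem_nhds h1), nhdsWithin_le_nhds (Iio_mem_nhds h2)]
        with ε hε1 hε2
      rw [indicator_of_mem]
      exact ⟨hε1, hε2⟩
  refine key.congr' ?_
  filter_upwards [self_mem_nhdsWithin] with ε hε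
  rw [setIntegral_indicator (hms ε)]
  congr 2
  exact inter_eq_right.2 (prod_mono (Ioi_subset_Ioi (le_of_lt hε)) (Ioi_subset_Ioi (le_of_lt hε)))

lemma Good.meas_x {u : ℝ → ℝ → ℝ} (hu : Good u) {ε : ℝ} (hε : 0 < ε) :
    ContinuousOn (fun x => u ε x) (Ioi ε) ∧ ContinuousOn (fun t => u t ε) (Ioi ε) := by
  constructor
  · exact hu.cont.comp (f := fun x : ℝ => (ε, x)) (by fun_prop)
      (fun x hx => ⟨hε, hε.trans hx⟩)
  · exact hu.cont.comp (f := fun x : ℝ => (x, ε)) (by fun_prop)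
      (fun x hx => ⟨hε.trans hx, hε⟩)

lemma Test.cont1 {φ : ℝ → ℝ → ℝ} (h : Test φ) (t : ℝ) : Continuous (fun x => φ t x) :=
  h.smooth.continuous.comp (by fun_prop : Continuous fun x : ℝ => (t, x))

lemma Test.cont2 {φ : ℝ → ℝ → ℝ} (h : Test φ) (x : ℝ) : Continuous (fun t => φ t x) :=
  h.smooth.continuous.comp (by fun_prop : Continuous fun t : ℝ => (t, x))

lemma Good.limB {u : ℝ → ℝ → ℝ} (hu : Good u) {φ : ℝ → ℝ → ℝ} (hφ : Test φ) (k : ℝ) :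
    Tendsto (fun ε : ℝ => ∫ x in Ioi ε, |u ε x - k| * φ ε x) (𝓝[>] 0)
      (𝓝 (∫ x in Ioi 0, |2 - k| * φ 0 x)) := by
  obtain ⟨M, hM0, hM⟩ := hφ.bdd
  obtain ⟨R, hR0, hR⟩ := hφ.box
  refine dct1 (w := fun ε x => |u ε x - k| * φ ε x) (C := (3 + |k|) * M) (R := R) (by positivity) ?_ ?_ ?_ ?_
  · intro ε hε
    refine ContinuousOn.aestronglyMeasurable ?_ measurableSet_Ioi
    exact ((hu.meas_x hε).1.sub continuousOn_const).abs.mul (hφ.cont1 ε).continuousOn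
  · intro ε x hε hx
    rw [abs_mul, abs_abs]
    refine mul_le_mul ?_ (hM _ _) (abs_nonneg _) (by positivity)
    exact (abs_sub _ _).trans (by linarith [hu.bd ε x hε (hε.trans hx)])
  · intro ε x hx
    have := hR (ε, x) (Or.inr (lt_of_lt_of_le hx (le_abs_self x)))
    simp only at this
    simp only [this, mul_zero]
  · intro x hx
    have hu2 : Tendsto (fun ε => u ε x) (𝓝[>] 0) (𝓝 2) := by
      rw [tendsto_iff_dist_tendsto_zero]
      have h8 : Tendsto (fun ε : ℝ => 8 * ε) (𝓝[>] 0) (𝓝 0) := by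
        have : Tendsto (fun ε : ℝ => 8 * ε) (𝓝 0) (𝓝 (8 * 0)) :=
          (continuous_const.mul continuous_id).tendsto 0
        rw [mul_zero] at this
        exact this.mono_left nhdsWithin_le_nhds
      refine squeeze_zero' (Eventually.of_forall fun _ => dist_nonneg) ?_ h8
      filter_upwards [self_mem_nhdsWithin,
        nhdsWithin_le_nhds (Iio_mem_nhds (show (0:ℝ) < x / 3 by positivity))] with ε h1 h2
      have h2 : ε < x / 3 := h2
      exact hu.init ε x h1 (by linarith)
    exact ((hu2.sub_const k).abs).mul
      (((hφ.cont2 x).tendsto 0).mono_left nhdsWithin_le_nhds)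

lemma Qf_sum (k v : ℝ) : Qf k v + Qf (-k) v ≤ (max v 0) ^ 2 := by
  unfold Qf
  rcases max_cases v 0 with ⟨h, h'⟩ | ⟨h, h'⟩ <;> rw [h] <;>
  rcases abs_cases (v - k) with ⟨h1, h1'⟩ | ⟨h1, h1'⟩ <;>
  rcases abs_cases (v - -k) with ⟨h2, h2'⟩ | ⟨h2, h2'⟩ <;> rw [h1, h2] <;>
    nlinarith [sq_nonneg k, sq_nonneg v, mul_nonneg_of_nonpos_of_nonpos (a := -|v - k|) (b := -|v - -k|) (by simp) (by simp)]

lemma Good.final {u : ℝ → ℝ → ℝ} (hu : Good u) {φ ψ : ℝ → ℝ → ℝ} (hφ : Test φ) (hψ : Test ψ)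
    (hs : ∀ t, φ t 0 = ψ t 0) (k : ℝ) :
    0 ≤ (∫ z in Ioi 0 ×ˢ Ioi 0, Gint u φ k z) + (∫ z in Ioi 0 ×ˢ Ioi 0, Gint u ψ (-k) z)
      + ((∫ x in Ioi 0, |2 - k| * φ 0 x) + ∫ x in Ioi 0, |2 - (-k)| * ψ 0 x) := by
  obtain ⟨M, hM0, hM⟩ := hφ.bdd
  obtain ⟨R, hR0, hR⟩ := hφ.box
  obtain ⟨M', hM0', hM'⟩ := hψ.bdd
  obtain ⟨R', hR0', hR'⟩ := hψ.box
  have hcont : ∀ {χ : ℝ → ℝ → ℝ}, Test χ → ∀ (k : ℝ) {ε : ℝ}, 0 < ε →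
      ContinuousOn (fun t => Qf k (u t ε) * χ t ε) (Ioi ε) := by
    intro χ hχ k ε hε
    have := (hu.meas_x hε).2
    unfold Qf
    exact (((this.sub continuousOn_const).abs.mul (this.add continuousOn_const)).div_const 2).mul
      (hχ.cont2 ε).continuousOn
  have hz : ∀ {χ : ℝ → ℝ → ℝ} {R : ℝ}, Box R (fun z => χ z.1 z.2) → ∀ (k ε t : ℝ), R < t →
      Qf k (u t ε) * χ t ε = 0 := by
    intro χ R hR k ε t ht
    have := hR (t, ε) (Or.inl (lt_of_lt_of_le ht (le_abs_self t)))
    simp only at this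
    rw [this, mul_zero]
  have hbd : ∀ {χ : ℝ → ℝ → ℝ} {M : ℝ}, (∀ t x, |χ t x| ≤ M) → ∀ (k ε t : ℝ), 0 < ε → ε < t →
      |Qf k (u t ε) * χ t ε| ≤ (3 + |k|) * (3 + |k|) * M := by
    intro χ M hM k ε t hε ht
    rw [abs_mul]
    exact mul_le_mul (Qf_bd (hu.bd t ε (hε.trans ht) hε)) (hM _ _) (abs_nonneg _) (by positivity)
  have hint : ∀ {χ : ℝ → ℝ → ℝ}, Test χ → ∀ (k : ℝ) {ε : ℝ}, 0 < ε →
      IntegrableOn (fun t => Qf k (u t ε) * χ t ε) (Ioi ε) := by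
    intro χ hχ k ε hε
    obtain ⟨M, hM0, hM⟩ := hχ.bdd
    obtain ⟨R, hR0, hR⟩ := hχ.box
    exact int1 (C := (3 + |k|) * (3 + |k|) * M) (R := R) (by positivity)
      ((hcont hχ k hε).aestronglyMeasurable measurableSet_Ioi)
      (fun t ht => hbd hM k ε t hε ht) (fun t ht => hz hR k ε t ht)
  set r : ℝ → ℝ → ℝ := fun ε t => Qf k (u t ε) * φ t ε + Qf (-k) (u t ε) * ψ t ε with hr
  have hlim : Tendsto (fun ε => ∫ t in Ioi ε, max (r ε t) 0) (𝓝[>] 0) (𝓝 (∫ t in Ioi (0:ℝ), (0:ℝ))) := by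
    refine dct1 (w := fun ε t => max (r ε t) 0)
      (C := (3 + |k|) * (3 + |k|) * M + (3 + |(-k)|) * (3 + |(-k)|) * M') (R := max R R')
      (by positivity) ?_ ?_ ?_ ?_
    · intro ε hε
      exact (((hcont hφ k hε).add (hcont hψ (-k) hε)).sup continuousOn_const).aestronglyMeasurable
        measurableSet_Ioi
    · intro ε t hε ht
      have h1 : |r ε t| ≤ _ := (abs_add_le _ _).trans
        (add_le_add (hbd hM k ε t hε ht) (hbd hM' (-k) ε t hε ht))
      refine le_trans ?_ h1
      rw [abs_of_nonneg (le_max_right _ _)]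
      exact max_le (le_abs_self _) (abs_nonneg _)
    · intro ε t ht
      simp only [hr]
      rw [hz hR k ε t ((le_max_left _ _).trans_lt ht), hz hR' (-k) ε t ((le_max_right _ _).trans_lt ht)]
      simp
    · intro t ht
      have hle : ∀ᶠ ε in 𝓝[>] (0:ℝ), max (r ε t) 0 ≤
          (ε / t) ^ 2 * M + (3 + |(-k)|) * (3 + |(-k)|) * |ψ t ε - φ t ε| := by
        filter_upwards [self_mem_nhdsWithin] with ε hε
        have hε : 0 < ε := hε
        have hb := hu.bd t ε ht hε
        have hup := hu.upper t ε ht hε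
        have h1 := Qf_sum k (u t ε)
        have h2 : (max (u t ε) 0) ^ 2 ≤ (ε / t) ^ 2 :=
          pow_le_pow_left₀ (le_max_right _ _) (max_le hup (by positivity)) 2
        have h3 := hφ.nonneg t ε
        have h4 := (le_abs_self _).trans (hM t ε)
        have h5 : (Qf k (u t ε) + Qf (-k) (u t ε)) * φ t ε ≤ (ε / t) ^ 2 * M := by
          calc _ ≤ (ε / t) ^ 2 * φ t ε := mul_le_mul_of_nonneg_right (h1.trans h2) h3
            _ ≤ _ := mul_le_mul_of_nonneg_left h4 (by positivity)
        have h6 : Qf (-k) (u t ε) * (ψ t ε - φ t ε) ≤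
            (3 + |(-k)|) * (3 + |(-k)|) * |ψ t ε - φ t ε| := by
          refine (le_abs_self _).trans ?_
          rw [abs_mul]
          exact mul_le_mul_of_nonneg_right (Qf_bd hb) (abs_nonneg _)
        refine max_le ?_ (by positivity)
        have : r ε t = (Qf k (u t ε) + Qf (-k) (u t ε)) * φ t ε + Qf (-k) (u t ε) * (ψ t ε - φ t ε) := by
          simp only [hr]; ring
        rw [this]; exact add_le_add h5 h6
      refine squeeze_zero' (Eventually.of_forall fun _ => le_max_right _ _) hle ?_
      have hc : Continuous fun ε : ℝ => (ε / t) ^ 2 * M + (3 + |(-k)|) * (3 + |(-k)|) * |ψ t ε - φ t ε| := by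
        have a := hψ.cont1 t
        have b := hφ.cont1 t
        fun_prop
      have := (hc.tendsto 0).mono_left (nhdsWithin_le_nhds (s := Ioi 0))
      simpa [hs] using this
  simp only [integral_zero] at hlim
  have hA := (hu.limA hφ k).add (hu.limA hψ (-k))
  have hB := (hu.limB hφ k).add (hu.limB hψ (-k))
  refine le_of_tendsto_of_tendsto (f := fun ε => - ∫ t in Ioi ε, max (r ε t) 0) (by simpa using hlim.neg)
    (hA.add hB) ?_
  filter_upwards [self_mem_nhdsWithin] with ε hε
  have hε : 0 < ε := hε
  rw [hu.identity hφ k hε, hu.identity hψ (-k) hε]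
  have i1 := hint hφ k hε
  have i2 := hint hψ (-k) hε
  have hadd : ∫ t in Ioi ε, r ε t = (∫ t in Ioi ε, Qf k (u t ε) * φ t ε) +
      ∫ t in Ioi ε, Qf (-k) (u t ε) * ψ t ε := integral_add i1 i2
  have hri : IntegrableOn (r ε) (Ioi ε) := i1.add i2
  have hmono : ∫ t in Ioi ε, r ε t ≤ ∫ t in Ioi ε, max (r ε t) 0 :=
    integral_mono hri hri.pos_part fun t => le_max_left _ _
  linarith


lemma split_neg {H : ℝ → ℝ} (h1 : IntegrableOn H (Ioi 0))
    (h2 : IntegrableOn (fun x => H (-x)) (Ioi 0)) :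
    ∫ x, H x = (∫ x in Ioi 0, H x) + ∫ x in Ioi 0, H (-x) := by
  have h3 : IntegrableOn H (Iic 0) := by
    rw [integrableOn_Iic_iff_integrableOn_Iio]
    have := (Measure.measurePreserving_neg (volume : Measure ℝ)).integrableOn_comp_preimage
      (Homeomorph.neg ℝ).measurableEmbedding (f := H) (s := Iio 0)
    rw [← this]
    have e : (Neg.neg ⁻¹' Iio (0:ℝ)) = Ioi 0 := by ext x; simp
    rw [e]
    exact h2
  rw [integral_comp_neg_Ioi, neg_zero, ← intervalIntegral.integral_Iic_add_Ioi h3 h1, add_comm]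

lemma Test.refl {φ : ℝ → ℝ → ℝ} (h : Test φ) : Test (fun t x => φ t (-x)) := by
  refine ⟨?_, ?_, fun t x => h.nonneg _ _⟩
  · exact h.smooth.comp (contDiff_fst.prodMk contDiff_snd.neg)
  · exact h.cpt.comp_homeomorph ((Homeomorph.refl ℝ).prodCongr (Homeomorph.neg ℝ))

lemma usol_neg (F : ℝ → ℝ → ℝ → ℝ × ℝ) (Δ : ℝ → ℝ → ℝ × ℝ) (t : ℝ) {x : ℝ} (hx : 0 < x) :
    usol F Δ t (-x) = - usol F Δ t x := by
  unfold usol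
  rw [if_neg (by linarith), if_pos (by linarith), if_pos hx, neg_neg]

lemma Gint_neg (F : ℝ → ℝ → ℝ → ℝ × ℝ) (Δ : ℝ → ℝ → ℝ × ℝ) (φ : ℝ → ℝ → ℝ) (k t : ℝ) {x : ℝ}
    (hx : 0 < x) : Gint (usol F Δ) φ k (t, -x) =
      Gint (usol F Δ) (fun t x => φ t (-x)) (-k) (t, x) := by
  unfold Gint
  simp only
  rw [usol_neg F Δ t hx, g'_odd, deriv_comp_neg (fun y => φ t y)]
  have e : -usol F Δ t x - k = -(usol F Δ t x - -k) := by ring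
  rw [e, abs_neg, Real.sign_neg]
  ring

lemma init_int {φ : ℝ → ℝ → ℝ} (h : Test φ) (c : ℝ) :
    IntegrableOn (fun x => c * φ 0 x) (Ioi 0) := by
  obtain ⟨M, hM0, hM⟩ := h.bdd
  obtain ⟨R, hR0, hR⟩ := h.box
  have hc : Continuous fun x : ℝ => φ 0 x :=
    h.smooth.continuous.comp (f := fun x : ℝ => ((0:ℝ), x)) (by fun_prop)
  refine Integrable.const_mul ?_ c
  exact int1 hM0 hc.aestronglyMeasurable (fun x _ => hM 0 x)
    (fun x hx => hR (0, x) (Or.inr (hx.trans_le (le_abs_self x))))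

lemma main_bound {F : ℝ → ℝ → ℝ → ℝ × ℝ} {Δ : ℝ → ℝ → ℝ × ℝ} (hu : Good (usol F Δ)) {t : ℝ}
    (ht : 0 < t) (x : ℝ) : |usol F Δ t x| ≤ 3 := by
  rcases lt_trichotomy x 0 with h | h | h
  · have := usol_neg F Δ t (x := -x) (by linarith)
    rw [neg_neg] at this
    rw [this, abs_neg]
    exact hu.bd t _ ht (by linarith)
  · subst h; simp [usol]
  · exact hu.bd t x ht h

lemma main_ineq {F : ℝ → ℝ → ℝ → ℝ × ℝ} {Δ : ℝ → ℝ → ℝ × ℝ} (hu : Good (usol F Δ))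
    {φ : ℝ → ℝ → ℝ} (hφ : Test φ) (k : ℝ) :
    0 ≤ (∫ t in Ioi (0:ℝ), ∫ x : ℝ, Gint (usol F Δ) φ k (t, x))
      + ∫ x : ℝ, |u₀ x - k| * φ 0 x := by
  have hψ := hφ.refl
  have h0 := hu.final hφ hψ (by simp) k
  have e2 : ∫ x : ℝ, |u₀ x - k| * φ 0 x =
      (∫ x in Ioi 0, |2 - k| * φ 0 x) + ∫ x in Ioi 0, |2 - (-k)| * φ 0 (-x) := by
    have c1 : EqOn (fun x => |2 - k| * φ 0 x) (fun x => |u₀ x - k| * φ 0 x) (Ioi 0) := by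
      intro x hx
      have hx : 0 < x := hx
      simp [u₀, hx.le.not_gt]
    have c2 : EqOn (fun x => |2 - (-k)| * φ 0 (-x)) (fun x => |u₀ (-x) - k| * φ 0 (-x))
        (Ioi 0) := by
      intro x hx
      have hx : 0 < x := hx
      have e : (2:ℝ) - -k = -(-2 - k) := by ring
      simp only [u₀, Left.neg_neg_iff, hx, if_true]
      rw [e, abs_neg]
    rw [split_neg ((init_int hφ _).congr_fun c1 measurableSet_Ioi)
      ((init_int hψ _).congr_fun c2 measurableSet_Ioi),
      setIntegral_congr_fun measurableSet_Ioi c1, setIntegral_congr_fun measurableSet_Ioi c2]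
  have i1 := hu.Gint_int hφ k
  have i2 := hu.Gint_int hψ (-k)
  rw [Measure.volume_eq_prod] at i1 i2 h0
  rw [setIntegral_prod _ i1, setIntegral_prod _ i2] at h0
  rw [IntegrableOn, ← Measure.prod_restrict] at i1 i2
  have e1 : ∫ t in Ioi (0:ℝ), ∫ x : ℝ, Gint (usol F Δ) φ k (t, x) =
      (∫ t in Ioi (0:ℝ), ∫ x in Ioi (0:ℝ), Gint (usol F Δ) φ k (t, x)) +
      ∫ t in Ioi (0:ℝ), ∫ x in Ioi (0:ℝ), Gint (usol F Δ) (fun t x => φ t (-x)) (-k) (t, x) := by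
    rw [← integral_add i1.integral_prod_left i2.integral_prod_left]
    apply integral_congr_ae
    filter_upwards [i1.prod_right_ae, i2.prod_right_ae] with t h1 h2
    have c : EqOn (fun x => Gint (usol F Δ) (fun t x => φ t (-x)) (-k) (t, x))
        (fun x => Gint (usol F Δ) φ k (t, -x)) (Ioi 0) :=
      fun x hx => (Gint_neg F Δ φ k t hx).symm
    rw [setIntegral_congr_fun measurableSet_Ioi c]
    exact split_neg (H := fun x => Gint (usol F Δ) φ k (t, x)) h1
      (IntegrableOn.congr_fun h2 c measurableSet_Ioi)
  rw [e1, e2]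
  exact h0

/-- The function `u` built from `F` and `Δ` is a bounded Kruzhkov entropy solution of
`∂ₜ u + ∂ₓ(u²/2 + g(x)) = 0` with initial datum `u₀`. -/
theorem stmt_14 (F : ℝ → ℝ → ℝ → ℝ × ℝ) (hF : IsHSFlow F)
    (Δ : ℝ → ℝ → ℝ × ℝ) (hΔ : IsDeltaMap F Δ) :
    (∃ M : ℝ, ∀ t ∈ Ioi (0:ℝ), ∀ x : ℝ, |usol F Δ t x| ≤ M) ∧
    ∀ φ : ℝ → ℝ → ℝ,
      ContDiff ℝ (⊤ : ℕ∞) (fun z : ℝ × ℝ => φ z.1 z.2) →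
      HasCompactSupport (fun z : ℝ × ℝ => φ z.1 z.2) →
      (∀ t x : ℝ, 0 ≤ φ t x) →
      ∀ k : ℝ,
        0 ≤ (∫ t in Ioi (0:ℝ), ∫ x : ℝ,
              (|usol F Δ t x - k| * deriv (fun s => φ s x) t
                + Real.sign (usol F Δ t x - k)
                    * ((usol F Δ t x) ^ 2 / 2 - k ^ 2 / 2) * deriv (fun y => φ t y) x
                - Real.sign (usol F Δ t x - k) * g' x * φ t x))
            + ∫ x : ℝ, |u₀ x - k| * φ 0 x := by
  have hu := good_usol hF hΔ
  refine ⟨⟨3, fun t ht x => main_bound hu ht x⟩, fun φ h1 h2 h3 k => ?_⟩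
  exact main_ineq hu ⟨h1, h2, h3⟩ k
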